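/- arXiv:1509.01089 — 3 statements merged into one kernel-verified Lean document; each statement's English description precedes it below -/
import Mathlib

section
/- Let v : ℝ^p → ℝ^p be continuously differentiable and homogeneous of degree 2 (v(λω) = λ²v(ω) for all λ, ω), and let ω₀ ≠ 0 be a steady state, v(ω₀) = 0. For a point ω, let u(ω) (resp. s(ω)) denote the number of roots, counted with multiplicity, of the characteristic polynomial over ℂ of the Jacobian matrix Dv(ω) that have strictly positive (resp. strictly negative) real part. Then every μω₀ with μ ∈ ℝ is also a steady state, and: for μ > 0 one has u(μω₀) = u(ω₀) and s(μω₀) = s(ω₀), while for μ < 0 one has u(μω₀) = s(ω₀) and s(μω₀) = u(ω₀). -/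
/-- The Jacobian matrix of a map `v : ℝᵖ → ℝᵖ` at a point `ω`. -/
noncomputable def jacobianMatrix {p : ℕ} (v : (Fin p → ℝ) → (Fin p → ℝ))
    (ω : Fin p → ℝ) : Matrix (Fin p) (Fin p) ℝ :=
  Matrix.of fun i j => fderiv ℝ v ω (Pi.single j 1) i

open Classical in
/-- `u(ω)`: the number of roots (with multiplicity) of the characteristic polynomial
of the Jacobian `Dv(ω)` over `ℂ` with strictly positive real part. -/
noncomputable def unstableCount {p : ℕ} (v : (Fin p → ℝ) → (Fin p → ℝ))
    (ω : Fin p → ℝ) : ℕ :=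
  Multiset.card (((jacobianMatrix v ω).charpoly.aroots ℂ).filter fun z => 0 < z.re)

open Classical in
/-- `s(ω)`: the number of roots (with multiplicity) of the characteristic polynomial
of the Jacobian `Dv(ω)` over `ℂ` with strictly negative real part. -/
noncomputable def stableCount {p : ℕ} (v : (Fin p → ℝ) → (Fin p → ℝ))
    (ω : Fin p → ℝ) : ℕ :=
  Multiset.card (((jacobianMatrix v ω).charpoly.aroots ℂ).filter fun z => z.re < 0)

theorem charpoly_smul_eq_scaleRoots {p : ℕ} (A : Matrix (Fin p) (Fin p) ℝ) (c : ℝ) (hc : c ≠ 0) :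
    (c • A).charpoly = A.charpoly.scaleRoots c := by
  apply Polynomial.funext
  intro x
  obtain ⟨y, rfl⟩ : ∃ y, x = c * y := ⟨x / c, by field_simp⟩
  rw [Polynomial.scaleRoots_eval_mul, Matrix.eval_charpoly, Matrix.eval_charpoly,
    Matrix.charpoly_natDegree_eq_dim, ← Matrix.det_smul]
  congr 1
  ext i j
  by_cases h : i = j
  · subst h; simp; ring
  · simp [h]

theorem aroots_charpoly_smul {p : ℕ} (A : Matrix (Fin p) (Fin p) ℝ) (c : ℝ) (hc : c ≠ 0) :
    (c • A).charpoly.aroots ℂ = (A.charpoly.aroots ℂ).map (fun z => (c : ℂ) * z) := by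
  rw [charpoly_smul_eq_scaleRoots A c hc, Polynomial.aroots, Polynomial.map_scaleRoots,
    Polynomial.roots_scaleRoots]
  · rfl
  · simpa using hc
  · simp [(Matrix.charpoly_monic A).leadingCoeff]

theorem jacobianMatrix_smul {p : ℕ} (v : (Fin p → ℝ) → (Fin p → ℝ))
    (hcd : ContDiff ℝ 1 v)
    (hhom : ∀ (c : ℝ) (ω : Fin p → ℝ), v (c • ω) = c ^ 2 • v ω)
    (ω : Fin p → ℝ) (c : ℝ) (hc : c ≠ 0) :
    jacobianMatrix v (c • ω) = c • jacobianMatrix v ω := by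
  have hd : Differentiable ℝ v := hcd.differentiable one_ne_zero
  have h1 : HasFDerivAt (fun x : Fin p → ℝ => v (c • x))
      ((fderiv ℝ v (c • ω)).comp (c • ContinuousLinearMap.id ℝ (Fin p → ℝ))) ω :=
    (hd (c • ω)).hasFDerivAt.comp ω ((hasFDerivAt_id ω).const_smul c)
  have h2 : HasFDerivAt (fun x : Fin p → ℝ => v (c • x)) (c ^ 2 • fderiv ℝ v ω) ω := by
    simp only [hhom]
    exact (hd ω).hasFDerivAt.const_smul (c ^ 2)
  have h3 := h1.unique h2
  ext i j
  have h4 := congrFun (congrArg (fun L => L (Pi.single j 1)) h3) i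
  simp only [ContinuousLinearMap.comp_apply, ContinuousLinearMap.smul_apply,
    ContinuousLinearMap.id_apply, map_smul, Pi.smul_apply, smul_eq_mul] at h4
  simp only [jacobianMatrix, Matrix.of_apply, Matrix.smul_apply, smul_eq_mul]
  apply mul_left_cancel₀ hc
  rw [h4]; ring

/-- For a `C¹` map `v : ℝᵖ → ℝᵖ` homogeneous of degree 2 with
steady state `ω₀ ≠ 0`, every `μ ω₀` is a steady state, and the counts `u`, `s` of
eigenvalues of the Jacobian with positive/negative real part satisfy
`u(μω₀) = u(ω₀)`, `s(μω₀) = s(ω₀)` for `μ > 0` and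
`u(μω₀) = s(ω₀)`, `s(μω₀) = u(ω₀)` for `μ < 0`. -/
theorem stability_counts_along_line_of_steady_motions
    (p : ℕ) (v : (Fin p → ℝ) → (Fin p → ℝ))
    (hcd : ContDiff ℝ 1 v)
    (hhom : ∀ (c : ℝ) (ω : Fin p → ℝ), v (c • ω) = c ^ 2 • v ω)
    (ω₀ : Fin p → ℝ) (hω₀ : ω₀ ≠ 0) (hss : v ω₀ = 0) :
    (∀ μ : ℝ, v (μ • ω₀) = 0) ∧
    (∀ μ : ℝ, 0 < μ →
      unstableCount v (μ • ω₀) = unstableCount v ω₀ ∧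
      stableCount v (μ • ω₀) = stableCount v ω₀) ∧
    (∀ μ : ℝ, μ < 0 →
      unstableCount v (μ • ω₀) = stableCount v ω₀ ∧
      stableCount v (μ • ω₀) = unstableCount v ω₀) := by
  refine ⟨fun μ => by rw [hhom, hss, smul_zero], fun μ hμ => ?_, fun μ hμ => ?_⟩
  · unfold unstableCount stableCount
    rw [jacobianMatrix_smul v hcd hhom ω₀ μ hμ.ne', aroots_charpoly_smul _ μ hμ.ne',
      Multiset.filter_map, Multiset.filter_map, Multiset.card_map, Multiset.card_map]
    constructor <;> congr 2 <;> ext z <;>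
      simp [mul_pos_iff_of_pos_left hμ, mul_neg_iff, hμ, hμ.le, not_lt.mpr hμ.le]
  · unfold unstableCount stableCount
    rw [jacobianMatrix_smul v hcd hhom ω₀ μ hμ.ne, aroots_charpoly_smul _ μ hμ.ne,
      Multiset.filter_map, Multiset.filter_map, Multiset.card_map, Multiset.card_map]
    constructor <;> congr 2 <;> ext z <;>
      simp [mul_pos_iff, mul_neg_iff, hμ, not_lt.mpr hμ.le]
end

section
/- Let v : ℝ^p → ℝ^p be continuously differentiable and homogeneous of degree 2 (v(λω) = λ²v(ω)), and suppose there is a symmetric positive definite bilinear form B on ℝ^p with B(v(ω), ω) = 0 for all ω (a positive definite quadratic first integral). Assume the zero set of v away from the origin is the union of finitely many punctured lines: there are distinct one-dimensional subspaces ℓ₁, …, ℓ_N with {ω ≠ 0 : v(ω) = 0} = ⋃_k (ℓ_k \ {0}), and that each is nondegenerate: at every nonzero zero ω of v, 0 is a root of algebraic multiplicity exactly 1 of the characteristic polynomial of the Jacobian Dv(ω). For ω_k ∈ ℓ_k \ {0} let j(ω) = (−1)^{s(ω)}, where s(ω) is the number of eigenvalues of Dv(ω) (with multiplicity) having negative real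 part, and let i_k = j(ω_k) + j(−ω_k). Then the sum of the indices equals Σ_{k=1}^N i_k = 1 + (−1)^{p+1}. -/
/-- `j(ω) = (−1)^{s(ω)}`, the sign attached to a steady state `ω`. -/
noncomputable def signJ {p : ℕ} (v : (Fin p → ℝ) → (Fin p → ℝ))
    (ω : Fin p → ℝ) : ℤ :=
  (-1 : ℤ) ^ stableCount v ω

open Polynomial MeasureTheory Filter Topology

/-- coefficient of `t^k` in `det (1 + t A)`. -/
noncomputable def cfM {p : ℕ} (k : ℕ) (A : Matrix (Fin p) (Fin p) ℝ) : ℝ :=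
  (-1) ^ k * A.charpolyRev.coeff k

lemma det_one_add_eq_sum {p : ℕ} (A : Matrix (Fin p) (Fin p) ℝ) (t : ℝ) :
    (1 + t • A).det = ∑ k ∈ Finset.range (p + 1), cfM k A * t ^ k := by
  have h : (1 + t • A).det = A.charpolyRev.eval (-t) := by
    rw [Matrix.charpolyRev, ← Polynomial.coe_evalRingHom, RingHom.map_det]
    congr 1
    ext i j
    by_cases hij : i = j <;> simp [hij] <;> ring
  rw [h, Polynomial.eval_eq_sum_range' (n := p + 1)]
  · refine Finset.sum_congr rfl fun k _ => ?_
    rw [cfM, neg_pow]; ring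
  · rw [← Matrix.reverse_charpoly]
    refine lt_of_le_of_lt (Polynomial.reverse_natDegree_le _) ?_
    simp [Matrix.charpoly_natDegree_eq_dim]

lemma cfM_eq_charpoly {p : ℕ} (k : ℕ) (hk : k ≤ p) (A : Matrix (Fin p) (Fin p) ℝ) :
    cfM k A = (-1) ^ k * A.charpoly.coeff (p - k) := by
  rw [cfM, ← Matrix.reverse_charpoly, Polynomial.coeff_reverse, Polynomial.revAt_le]
  · simp [Matrix.charpoly_natDegree_eq_dim]
  · simpa [Matrix.charpoly_natDegree_eq_dim] using hk

lemma continuous_cfM {p : ℕ} (k : ℕ) (hk : k ≤ p) :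
    Continuous (fun A : Matrix (Fin p) (Fin p) ℝ => cfM k A) := by
  have : (fun A : Matrix (Fin p) (Fin p) ℝ => cfM k A) = fun A =>
      (-1) ^ k * MvPolynomial.eval (fun ij : Fin p × Fin p => A ij.1 ij.2)
        ((Matrix.charpoly.univ ℝ (Fin p)).coeff (p - k)) := by
    ext A
    rw [cfM_eq_charpoly k hk]
    congr 1
    have := Matrix.charpoly.univ_coeff_eval₂Hom (Fin p) (RingHom.id ℝ)
      (fun ij : Fin p × Fin p => A ij.1 ij.2) (p - k)
    exact this.symm
  rw [this]
  refine continuous_const.mul ((MvPolynomial.continuous_eval _).comp ?_)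
  exact continuous_pi fun ij => (continuous_apply_apply ij.1 ij.2)

lemma cfM_smul {p : ℕ} (k : ℕ) (hk : k ≤ p) (c : ℝ) (A : Matrix (Fin p) (Fin p) ℝ) :
    cfM k (c • A) = c ^ k * cfM k A := by
  -- compare polynomials
  have h : (∑ k ∈ Finset.range (p + 1), C (cfM k (c • A)) * X ^ k : ℝ[X]) =
      ∑ k ∈ Finset.range (p + 1), C (c ^ k * cfM k A) * X ^ k := by
    refine Polynomial.funext fun t => ?_
    simp only [eval_finsetSum, eval_mul, eval_C, eval_pow, eval_X]
    rw [← det_one_add_eq_sum, smul_smul, det_one_add_eq_sum]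
    refine Finset.sum_congr rfl fun k _ => ?_
    ring
  have := congrArg (fun q => q.coeff k) h
  simpa only [Polynomial.finsetSum_coeff, Polynomial.coeff_C_mul_X_pow, Finset.sum_ite_eq,
    Finset.mem_range, Nat.lt_succ_iff.2 hk, if_true] using this

/-- Sign lemma for real polynomials. -/
lemma sign_aux (g : ℝ[X]) (hg : g ≠ 0) (h0 : g.coeff 0 ≠ 0) :
    0 < (-1 : ℝ) ^ (Multiset.card ((g.aroots ℂ).filter fun z => z.re < 0)) *
      ((-1) ^ g.natDegree * g.leadingCoeff * g.coeff 0) := by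
  induction g using UniqueFactorizationMonoid.induction_on_prime with
  | h₁ => exact absurd rfl hg
  | h₂ x hx =>
    obtain ⟨r, hr, rfl⟩ := Polynomial.isUnit_iff.1 hx
    have : r ≠ 0 := hr.ne_zero
    simp
    positivity
  | h₃ a q ha hq ih =>
    have hq0 := hq.ne_zero
    rw [Polynomial.mul_coeff_zero] at h0
    have hq1 := left_ne_zero_of_mul h0
    have ha1 := right_ne_zero_of_mul h0
    have iha := ih ha ha1
    rw [Polynomial.aroots_mul hg, Multiset.filter_add, Multiset.card_add,
      Polynomial.natDegree_mul hq0 ha, Polynomial.leadingCoeff_mul, Polynomial.mul_coeff_zero]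
    have hqpos : 0 < (-1 : ℝ) ^ (Multiset.card ((q.aroots ℂ).filter fun z => z.re < 0)) *
      ((-1) ^ q.natDegree * q.leadingCoeff * q.coeff 0) := by
      have hirr := hq.irreducible
      have hd2 : q.natDegree ≤ 2 := Polynomial.natDegree_le_of_degree_le hirr.degree_le_two
      have hd0 : 0 < q.natDegree := hirr.natDegree_pos
      have hcard : Multiset.card (q.aroots ℂ) = q.natDegree := by
        rw [Polynomial.aroots_def, IsAlgClosed.card_roots_eq_natDegree, Polynomial.natDegree_map]
      obtain hd | hd : q.natDegree = 1 ∨ q.natDegree = 2 := by omega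
      · obtain ⟨x, hx⟩ := Multiset.card_eq_one.1 (hcard.trans hd)
        have hform : q = C (q.coeff 1) * X + C (q.coeff 0) :=
          Polynomial.eq_X_add_C_of_natDegree_le_one hd.le
        have hlc : q.leadingCoeff = q.coeff 1 := by rw [leadingCoeff, hd]
        have hl0 : q.coeff 1 ≠ 0 := hlc ▸ leadingCoeff_ne_zero.2 hq0
        have hroot : x ∈ q.aroots ℂ := by simp [hx]
        rw [Polynomial.mem_aroots] at hroot
        have h2 := hroot.2
        rw [hform] at h2
        simp at h2
        have hxv : x = ((-(q.coeff 0) / q.coeff 1 : ℝ) : ℂ) := by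
          have : (q.coeff 1 : ℂ) ≠ 0 := by exact_mod_cast hl0
          push_cast
          field_simp
          linear_combination h2
        rw [hx, hd, hlc, Multiset.filter_singleton]
        have hre : x.re = -(q.coeff 0) / q.coeff 1 := by rw [hxv, Complex.ofReal_re]
        have hprod : q.coeff 1 * q.coeff 0 ≠ 0 := mul_ne_zero hl0 hq1
        have hre2 : x.re = -(q.coeff 1 * q.coeff 0) / (q.coeff 1) ^ 2 := by
          rw [hre]; field_simp
        split_ifs with hneg
        · rw [hre2, div_neg_iff] at hneg
          have : 0 < q.coeff 1 ^ 2 := by positivity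
          rcases hneg with h | h
          · linarith
          · simp; nlinarith
        · rw [hre2, div_neg_iff] at hneg
          have : 0 < q.coeff 1 ^ 2 := by positivity
          push Not at hneg
          have h3 := hneg.2
          have : q.coeff 1 * q.coeff 0 < 0 := by
            rcases lt_or_gt_of_ne hprod with h | h
            · exact h
            · have := h3 (by linarith)
              linarith
          simp; linarith
      · -- two conjugate roots
        have hnoroot : ∀ r : ℝ, q.eval r ≠ 0 := by
          intro r hr
          exact hirr.not_isRoot_of_natDegree_ne_one (by omega) hr
        obtain ⟨x, y, hx⟩ := Multiset.card_eq_two.1 (hcard.trans hd)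
        have hxr : x ∈ q.aroots ℂ := by simp [hx]
        have hxr2 := (Polynomial.mem_aroots.1 hxr).2
        have hconj : (starRingEnd ℂ) x ∈ q.aroots ℂ := by
          rw [Polynomial.mem_aroots]
          refine ⟨hq0, ?_⟩
          rw [Polynomial.aeval_conj, hxr2, map_zero]
        have hne : (starRingEnd ℂ) x ≠ x := by
          intro h
          obtain ⟨r, hr⟩ := Complex.conj_eq_iff_real.1 h
          apply hnoroot r
          rw [hr] at hxr2
          have : ((q.eval r : ℝ) : ℂ) = 0 := by
            rw [← hxr2]
            simpa using (Polynomial.aeval_algebraMap_apply ℂ r q).symm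
          exact_mod_cast this
        have hy : y = (starRingEnd ℂ) x := by
          rw [hx] at hconj
          simp only [Multiset.insert_eq_cons, Multiset.mem_cons, Multiset.mem_singleton] at hconj
          rcases hconj with h | h
          · exact absurd h hne
          · exact h.symm
        have hlc : q.leadingCoeff = q.coeff 2 := by rw [leadingCoeff, hd]
        have hl0 : q.coeff 2 ≠ 0 := hlc ▸ leadingCoeff_ne_zero.2 hq0
        have heven : (-1 : ℝ) ^ (Multiset.card ((q.aroots ℂ).filter fun z => z.re < 0)) = 1 := by
          rw [hx, hy]
          by_cases hxn : x.re < 0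
          · have : Multiset.card (Multiset.filter (fun z : ℂ => z.re < 0)
                {x, (starRingEnd ℂ) x}) = 2 := by
              simp [Multiset.insert_eq_cons, Multiset.filter_singleton, hxn]
            rw [this]; norm_num
          · have : Multiset.card (Multiset.filter (fun z : ℂ => z.re < 0)
                {x, (starRingEnd ℂ) x}) = 0 := by
              simp [Multiset.insert_eq_cons, Multiset.filter_singleton, hxn]
            rw [this]; norm_num
        rw [heven, hd, hlc]
        have hform : ∀ r : ℝ, q.eval r = q.coeff 0 + q.coeff 1 * r + q.coeff 2 * r ^ 2 := by
          intro r
          rw [Polynomial.eval_eq_sum_range, hd]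
          simp [Finset.sum_range_succ]
        by_contra hcon
        have hdisc : 0 ≤ discrim (q.coeff 2) (q.coeff 1) (q.coeff 0) := by
          rw [discrim]
          norm_num at hcon
          nlinarith [sq_nonneg (q.coeff 1)]
        obtain ⟨r, hr⟩ := exists_quadratic_eq_zero hl0
          ⟨Real.sqrt (discrim (q.coeff 2) (q.coeff 1) (q.coeff 0)), (Real.mul_self_sqrt hdisc).symm⟩
        apply hnoroot r
        rw [hform]; linarith
    rw [pow_add, pow_add]
    have := mul_pos hqpos iha
    refine lt_of_lt_of_eq this ?_
    ring

lemma sign_charpoly {p : ℕ} (A : Matrix (Fin p) (Fin p) ℝ)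
    (hA : Multiset.count 0 (A.charpoly.aroots ℂ) = 1) :
    0 < (-1 : ℝ) ^ (Multiset.card ((A.charpoly.aroots ℂ).filter fun z => z.re < 0)) *
      cfM (p - 1) A := by
  have hmon := A.charpoly_monic
  have hdeg : A.charpoly.natDegree = p := by simp [Matrix.charpoly_natDegree_eq_dim]
  have hroot : (0 : ℂ) ∈ A.charpoly.aroots ℂ := by
    rw [← Multiset.one_le_count_iff_mem, hA]
  have h0 : A.charpoly.coeff 0 = 0 := by
    have := (Polynomial.mem_aroots.1 hroot).2
    rw [Polynomial.aeval_def, Polynomial.eval₂_at_zero] at this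
    simpa using this
  obtain ⟨g, hg⟩ := Polynomial.X_dvd_iff.2 h0
  have hgne : g ≠ 0 := by
    rintro rfl
    simp at hg
    exact hmon.ne_zero hg
  have hprod : X * g ≠ 0 := hg ▸ hmon.ne_zero
  have hgmon : g.leadingCoeff = 1 := by
    have := hmon.leadingCoeff
    rw [hg, leadingCoeff_mul] at this
    simpa using this
  have hgdeg : p = 1 + g.natDegree := by
    rw [← hdeg, hg, natDegree_mul X_ne_zero hgne, natDegree_X]
  have hroots : A.charpoly.aroots ℂ = {0} + g.aroots ℂ := by
    rw [hg, aroots_mul hprod, aroots_X]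
  have hg0 : g.coeff 0 ≠ 0 := by
    intro h
    have : (0 : ℂ) ∈ g.aroots ℂ := by
      rw [Polynomial.mem_aroots]
      refine ⟨hgne, ?_⟩
      rw [Polynomial.aeval_def, Polynomial.eval₂_at_zero, h, map_zero]
    rw [hroots, Multiset.count_add, Multiset.count_singleton_self] at hA
    have := Multiset.one_le_count_iff_mem.2 this
    omega
  have h1 : A.charpoly.coeff 1 = g.coeff 0 := by
    rw [hg]; exact Polynomial.coeff_X_mul g 0
  have key := sign_aux g hgne hg0
  rw [hgmon] at key
  rw [cfM_eq_charpoly _ (by omega), show p - (p - 1) = 1 by omega, h1, hroots, Multiset.filter_add,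
    Multiset.card_add, Multiset.filter_singleton, show p - 1 = g.natDegree by omega]
  simpa using key

/-- the continuous version of a bilinear form -/
noncomputable def bc {p : ℕ} (B : (Fin p → ℝ) →ₗ[ℝ] (Fin p → ℝ) →ₗ[ℝ] ℝ) :
    (Fin p → ℝ) →L[ℝ] (Fin p → ℝ) →L[ℝ] ℝ :=
  LinearMap.toContinuousLinearMap
    ((LinearMap.toContinuousLinearMap (𝕜 := ℝ) (E := Fin p → ℝ) (F' := ℝ)).toLinearMap ∘ₗ B)

lemma bc_apply {p : ℕ} (B : (Fin p → ℝ) →ₗ[ℝ] (Fin p → ℝ) →ₗ[ℝ] ℝ) (x y : Fin p → ℝ) :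
    bc B x y = B x y := rfl

lemma continuous_B {p : ℕ} (B : (Fin p → ℝ) →ₗ[ℝ] (Fin p → ℝ) →ₗ[ℝ] ℝ) :
    Continuous (fun x : (Fin p → ℝ) × (Fin p → ℝ) => B x.1 x.2) := by
  have : (fun x : (Fin p → ℝ) × (Fin p → ℝ) => B x.1 x.2) = fun x => bc B x.1 x.2 := rfl
  rw [this]
  fun_prop

lemma Continuous.bilinB {p : ℕ} {X : Type*} [TopologicalSpace X]
    (B : (Fin p → ℝ) →ₗ[ℝ] (Fin p → ℝ) →ₗ[ℝ] ℝ) {f g : X → Fin p → ℝ}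
    (hf : Continuous f) (hg : Continuous g) : Continuous (fun x => B (f x) (g x)) :=
  (continuous_B B).comp (hf.prodMk hg)

/-- Positive definite symmetric forms. -/
structure PDForm {p : ℕ} (B : (Fin p → ℝ) →ₗ[ℝ] (Fin p → ℝ) →ₗ[ℝ] ℝ) : Prop where
  symm : ∀ x y, B x y = B y x
  pos : ∀ x : Fin p → ℝ, x ≠ 0 → 0 < B x x

namespace PDForm
variable {p : ℕ} {B : (Fin p → ℝ) →ₗ[ℝ] (Fin p → ℝ) →ₗ[ℝ] ℝ}

lemma nonneg (h : PDForm B) (x : Fin p → ℝ) : 0 ≤ B x x := by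
  by_cases hx : x = 0
  · simp [hx]
  · exact (h.pos x hx).le

/-- A continuous function, homogeneous of degree two and positive off the origin,
on a closed cone. -/
lemma cone_lower (S : Set (Fin p → ℝ)) (hS : IsClosed S)
    (hcone : ∀ c : ℝ, 0 < c → ∀ x ∈ S, c • x ∈ S) (f : (Fin p → ℝ) → ℝ)
    (hf : ContinuousOn f {0}ᶜ) (hhom : ∀ c : ℝ, 0 < c → ∀ x, f (c • x) = c ^ 2 * f x)
    (hpos : ∀ x ∈ S, x ≠ 0 → 0 < f x) :
    ∃ m > 0, ∀ x ∈ S, x ≠ 0 → m * ‖x‖ ^ 2 ≤ f x := by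
  have hK : IsCompact (S ∩ Metric.sphere (0 : Fin p → ℝ) 1) :=
    (isCompact_sphere _ _).inter_left hS
  have hsub : S ∩ Metric.sphere (0 : Fin p → ℝ) 1 ⊆ {0}ᶜ := by
    rintro x ⟨-, hx⟩ h0
    simp at hx h0
    simp [h0] at hx
  have main : ∃ m > 0, ∀ x ∈ S ∩ Metric.sphere (0 : Fin p → ℝ) 1, m ≤ f x := by
    by_cases hne : (S ∩ Metric.sphere (0 : Fin p → ℝ) 1).Nonempty
    · obtain ⟨y, hy, hmin⟩ := hK.exists_isMinOn hne (hf.mono hsub)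
      exact ⟨f y, hpos y hy.1 (hsub hy), fun x hx => hmin hx⟩
    · refine ⟨1, one_pos, fun x hx => absurd ⟨x, hx⟩ hne⟩
  obtain ⟨m, hm, hb⟩ := main
  refine ⟨m, hm, fun x hx hx0 => ?_⟩
  have hn : 0 < ‖x‖ := norm_pos_iff.2 hx0
  have h1 := hb (‖x‖⁻¹ • x) ⟨hcone _ (inv_pos.2 hn) x hx, by simp [norm_smul, hn.ne']⟩
  rw [hhom _ (inv_pos.2 hn)] at h1
  have : f x = ‖x‖ ^ 2 * (‖x‖⁻¹ ^ 2 * f x) := by field_simp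
  rw [this, mul_comm]
  gcongr

lemma lower (h : PDForm B) : ∃ m > 0, ∀ x, m * ‖x‖ ^ 2 ≤ B x x := by
  obtain ⟨m, hm, hb⟩ := cone_lower (p := p) Set.univ isClosed_univ (fun _ _ _ _ => trivial)
    (fun x => B x x) (Continuous.bilinB B continuous_id continuous_id).continuousOn
    (fun c _ x => by simp; ring) (fun x _ hx => h.pos x hx)
  refine ⟨m, hm, fun x => ?_⟩
  by_cases hx : x = 0
  · simp [hx]
  · exact hb x trivial hx

lemma upper (B : (Fin p → ℝ) →ₗ[ℝ] (Fin p → ℝ) →ₗ[ℝ] ℝ) :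
    ∃ M > 0, ∀ x, B x x ≤ M * ‖x‖ ^ 2 := by
  refine ⟨‖bc B‖ + 1, by positivity, fun x => ?_⟩
  have h1 := (bc B).le_opNorm₂ x x
  have h2 := (le_abs_self (bc B x x)).trans h1
  rw [bc_apply] at h2
  nlinarith [sq_nonneg ‖x‖]

lemma integrable_gauss (h : PDForm B) {a : ℝ} (ha : 0 < a) :
    Integrable (fun x : Fin p → ℝ => Real.exp (-(a * B x x))) := by
  obtain ⟨m, hm, hb⟩ := h.lower
  have hp : (0 : ℝ) < p + 1 := by positivity
  have hI := (GaussianFourier.integrable_cexp_neg_mul_sum_add (ι := Fin p)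
    (b := ((a * m / (p + 1) : ℝ) : ℂ)) (by rw [Complex.ofReal_re]; positivity) 0).norm
  refine hI.mono' (Continuous.aestronglyMeasurable ?_) (Eventually.of_forall fun x => ?_)
  · have := Continuous.bilinB B continuous_id (continuous_id (X := Fin p → ℝ))
    simp only [id] at this
    fun_prop
  · rw [Real.norm_eq_abs, abs_of_pos (Real.exp_pos _), Complex.norm_exp]
    apply Real.exp_le_exp.2
    have h1 : ∑ i, x i ^ 2 ≤ p * ‖x‖ ^ 2 := by
      have : ∑ i, x i ^ 2 ≤ ∑ _i : Fin p, ‖x‖ ^ 2 := by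
        refine Finset.sum_le_sum fun i _ => ?_
        rw [← sq_abs]
        gcongr
        exact norm_le_pi_norm x i
      simpa using this
    have h2 : (-((a * m / (p + 1) : ℝ) : ℂ) * ∑ i, (x i : ℂ) ^ 2 +
        ∑ i, (0 : Fin p → ℂ) i * (x i : ℂ)).re = -(a * m / (p + 1)) * ∑ i, x i ^ 2 := by
      simp only [Pi.zero_apply, zero_mul, Finset.sum_const_zero, add_zero]
      rw [← Complex.ofReal_re (-(a * m / (p + 1)) * ∑ i, x i ^ 2)]
      push_cast
      rfl
    rw [h2]
    have h3 : a * m / (p + 1) * ∑ i, x i ^ 2 ≤ a * (m * ‖x‖ ^ 2) := by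
      rw [div_mul_eq_mul_div, div_le_iff₀ hp]
      have : a * m * ∑ i, x i ^ 2 ≤ a * m * (p * ‖x‖ ^ 2) := by gcongr
      nlinarith [mul_pos ha hm, sq_nonneg ‖x‖, mul_nonneg (mul_pos ha hm).le (sq_nonneg ‖x‖)]
    have h4 := mul_le_mul_of_nonneg_left (hb x) ha.le
    linarith

lemma gauss_pos (h : PDForm B) : 0 < ∫ x : Fin p → ℝ, Real.exp (-B x x) := by
  have := h.integrable_gauss one_pos
  simp only [one_mul] at this
  exact integral_exp_pos this

lemma integral_comp_linear (L : (Fin p → ℝ) →L[ℝ] (Fin p → ℝ)) (hL : L.det ≠ 0)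
    (g : (Fin p → ℝ) → ℝ) : ∫ x, g x = |L.det| * ∫ x, g (L x) := by
  have hinj : Function.Injective L := by
    have : IsUnit (L : (Fin p → ℝ) →ₗ[ℝ] (Fin p → ℝ)).det := isUnit_iff_ne_zero.2 hL
    exact (LinearEquiv.ofIsUnitDet (f := (L : (Fin p → ℝ) →ₗ[ℝ] (Fin p → ℝ)))
      (v := Pi.basisFun ℝ _) (v' := Pi.basisFun ℝ _)
      (by rw [LinearMap.det_toMatrix]; exact this)).injective
  have hsurj : Function.Surjective L :=
    (LinearMap.injective_iff_surjective (f := (L : (Fin p → ℝ) →ₗ[ℝ] (Fin p → ℝ)))).1 hinj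
  have := integral_image_eq_integral_abs_det_fderiv_smul volume MeasurableSet.univ
    (f := L) (f' := fun _ => L) (fun x _ => L.hasFDerivWithinAt) hinj.injOn g
  rw [Set.image_univ, hsurj.range_eq] at this
  simp only [Measure.restrict_univ, smul_eq_mul] at this
  rw [this, integral_const_mul]

lemma gauss_scale (B : (Fin p → ℝ) →ₗ[ℝ] (Fin p → ℝ) →ₗ[ℝ] ℝ) {a : ℝ} (ha : 0 < a) :
    ∫ x : Fin p → ℝ, Real.exp (-(a * B x x)) =
      (Real.sqrt a ^ p)⁻¹ * ∫ x : Fin p → ℝ, Real.exp (-B x x) := by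
  have := Measure.integral_comp_smul_of_nonneg (E := Fin p → ℝ) volume
    (fun x => Real.exp (-B x x)) (Real.sqrt a) (hR := Real.sqrt_nonneg a)
  simp only [Module.finrank_fin_fun, smul_eq_mul] at this
  rw [← this]
  congr 1
  ext x
  simp only [map_smul, LinearMap.smul_apply, smul_eq_mul]
  rw [← mul_assoc, Real.mul_self_sqrt ha.le]

end PDForm

/-- coefficients of `det (1 + t A)` for continuous linear maps -/
noncomputable def cf {p : ℕ} (k : ℕ) (A : (Fin p → ℝ) →L[ℝ] (Fin p → ℝ)) : ℝ :=
  cfM k (LinearMap.toMatrix' (A : (Fin p → ℝ) →ₗ[ℝ] (Fin p → ℝ)))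

lemma clm_det {p : ℕ} (A : (Fin p → ℝ) →L[ℝ] (Fin p → ℝ)) :
    A.det = (LinearMap.toMatrix' (A : (Fin p → ℝ) →ₗ[ℝ] (Fin p → ℝ))).det := by
  rw [LinearMap.det_toMatrix']

lemma det_one_add_cf {p : ℕ} (A : (Fin p → ℝ) →L[ℝ] (Fin p → ℝ)) (t : ℝ) :
    (1 + t • A).det = ∑ k ∈ Finset.range (p + 1), cf k A * t ^ k := by
  unfold cf
  rw [← det_one_add_eq_sum, clm_det]
  congr 1
  ext i j
  simp [LinearMap.toMatrix'_apply, Matrix.one_apply, Pi.single_apply]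

lemma continuous_toMatrix {p : ℕ} : Continuous (fun A : (Fin p → ℝ) →L[ℝ] (Fin p → ℝ) =>
    LinearMap.toMatrix' (A : (Fin p → ℝ) →ₗ[ℝ] (Fin p → ℝ))) := by
  refine continuous_matrix fun i j => ?_
  simp only [LinearMap.toMatrix'_apply]
  have : Continuous (fun A : (Fin p → ℝ) →L[ℝ] (Fin p → ℝ) => A (Pi.single j 1)) := by fun_prop
  exact (continuous_apply i).comp this

lemma continuous_cf {p : ℕ} (k : ℕ) (hk : k ≤ p) :
    Continuous (fun A : (Fin p → ℝ) →L[ℝ] (Fin p → ℝ) => cf k A) :=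
  (continuous_cfM k hk).comp continuous_toMatrix

lemma continuous_clm_det {p : ℕ} :
    Continuous (fun A : (Fin p → ℝ) →L[ℝ] (Fin p → ℝ) => A.det) := by
  simp only [clm_det]
  exact continuous_toMatrix.matrix_det

lemma cf_smul {p : ℕ} (k : ℕ) (hk : k ≤ p) (c : ℝ) (A : (Fin p → ℝ) →L[ℝ] (Fin p → ℝ)) :
    cf k (c • A) = c ^ k * cf k A := by
  unfold cf
  rw [← cfM_smul k hk]
  simp

lemma clm_det_mul {p : ℕ} (A B : (Fin p → ℝ) →L[ℝ] (Fin p → ℝ)) :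
    (A * B).det = A.det * B.det := by
  exact LinearMap.det_comp (A : (Fin p → ℝ) →ₗ[ℝ] (Fin p → ℝ)) B

/-- rank one projection -/
noncomputable def prj {p : ℕ} (B : (Fin p → ℝ) →ₗ[ℝ] (Fin p → ℝ) →ₗ[ℝ] ℝ) (e : Fin p → ℝ) :
    (Fin p → ℝ) →L[ℝ] (Fin p → ℝ) := (bc B e).smulRight e

lemma prj_apply {p : ℕ} (B : (Fin p → ℝ) →ₗ[ℝ] (Fin p → ℝ) →ₗ[ℝ] ℝ) (e x : Fin p → ℝ) :
    prj B e x = B e x • e := rfl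

lemma det_one_add_prj {p : ℕ} (B : (Fin p → ℝ) →ₗ[ℝ] (Fin p → ℝ) →ₗ[ℝ] ℝ) (e : Fin p → ℝ)
    (he : B e e = 1) (c : ℝ) : (1 + c • prj B e).det = 1 + c := by
  rw [clm_det]
  have h : LinearMap.toMatrix' ((1 + c • prj B e : (Fin p → ℝ) →L[ℝ] (Fin p → ℝ)) :
      (Fin p → ℝ) →ₗ[ℝ] (Fin p → ℝ)) =
      1 + Matrix.replicateCol Unit (c • e) *
        Matrix.replicateRow Unit (fun i => B e (Pi.single i 1)) := by
    ext i j
    simp only [LinearMap.toMatrix'_apply, Matrix.add_apply, Matrix.mul_apply]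
    simp [Matrix.one_apply, Pi.single_apply, prj_apply]
    ring
  rw [h, Matrix.det_one_add_replicateCol_mul_replicateRow]
  congr 1
  have h2 : B e e = ∑ i, e i * B e (Pi.single i 1) := by
    conv_lhs => rw [LinearMap.pi_apply_eq_sum_univ (B e) e]
    simp only [smul_eq_mul]
    refine Finset.sum_congr rfl fun i _ => ?_
    congr 2
    ext j
    simp [Pi.single_apply, eq_comm]
  rw [he] at h2
  simp only [dotProduct, Pi.smul_apply, smul_eq_mul]
  calc _ = c * ∑ i, e i * B e (Pi.single i 1) := by
        rw [Finset.mul_sum]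
        exact Finset.sum_congr rfl fun i _ => by ring
    _ = c := by rw [← h2, mul_one]

lemma tendsto_pow_mul_inv {p k : ℕ} (hk : k < p) :
    Tendsto (fun t : ℝ => t ^ k * t⁻¹ ^ (p - 1)) atTop (𝓝 (if k = p - 1 then 1 else 0)) := by
  split_ifs with h
  · refine tendsto_const_nhds.congr' ?_
    filter_upwards [eventually_gt_atTop 0] with t ht
    rw [h, ← mul_pow, mul_inv_cancel₀ ht.ne', one_pow]
  · have h1 : Tendsto (fun t : ℝ => t⁻¹ ^ (p - 1 - k)) atTop (𝓝 0) := by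
      have := (tendsto_inv_atTop_zero (𝕜 := ℝ)).pow (p - 1 - k)
      rwa [zero_pow (by omega)] at this
    refine h1.congr' ?_
    filter_upwards [eventually_gt_atTop 0] with t ht
    rw [show p - 1 = (p - 1 - k) + k by omega, pow_add]
    rw [mul_comm (t ^ k), mul_assoc, ← mul_pow, inv_mul_cancel₀ ht.ne', one_pow, mul_one]
    congr 1
    omega

lemma det_shrink {p : ℕ} (hp : 1 ≤ p) (B : (Fin p → ℝ) →ₗ[ℝ] (Fin p → ℝ) →ₗ[ℝ] ℝ) (e : Fin p → ℝ)
    (he : B e e = 1) {c : ℝ} (hc : c ≠ 0) :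
    (prj B e + c • (1 - prj B e)).det = c ^ (p - 1) := by
  have h : prj B e + c • (1 - prj B e) = c • (1 + (c⁻¹ - 1) • prj B e) := by
    ext x : 1
    simp only [add_apply, smul_apply,
      sub_apply, smul_add, smul_sub, smul_smul, sub_smul, mul_sub]
    rw [mul_inv_cancel₀ hc]
    simp only [one_smul, mul_one]
    abel
  have h2 : (c • (1 + (c⁻¹ - 1) • prj B e)).det = c ^ p * (1 + (c⁻¹ - 1) • prj B e).det := by
    rw [ContinuousLinearMap.det, ContinuousLinearMap.det, ContinuousLinearMap.toLinearMap_smul,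
      LinearMap.det_smul]
    simp
  rw [h, h2, det_one_add_prj B e he]
  obtain ⟨n, rfl⟩ : ∃ n, p = n + 1 := ⟨p - 1, by omega⟩
  rw [Nat.add_sub_cancel, pow_succ]
  field_simp
  ring

/-- The determinant of the regularised matrix is the coefficient. -/
lemma det_prj_add {p : ℕ} (hp : 1 ≤ p) (B : (Fin p → ℝ) →ₗ[ℝ] (Fin p → ℝ) →ₗ[ℝ] ℝ) (e : Fin p → ℝ)
    (he : B e e = 1) (A : (Fin p → ℝ) →L[ℝ] (Fin p → ℝ)) (hAe : A e = 0)
    (hA : ∀ x, B e (A x) = 0) : (prj B e + A).det = cf (p - 1) A := by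
  have hid : ∀ t : ℝ, t ≠ 0 → (1 + t • A).det =
      t ^ (p - 1) * (prj B e + t⁻¹ • (1 - prj B e) + A).det := by
    intro t ht
    rw [← det_shrink hp B e he ht, ← clm_det_mul]
    congr 1
    ext x : 1
    change x + t • A x =
      (prj B e + t • (1 - prj B e)) ((prj B e + t⁻¹ • (1 - prj B e) + A) x)
    have h5 : ((prj B e + t⁻¹ • (1 - prj B e) + A) x) = B e x • e + t⁻¹ • (x - B e x • e) + A x := rfl
    rw [h5]
    have hy := hA x
    generalize A x = y at *
    have h6 : ∀ z, (prj B e + t • (1 - prj B e)) z = B e z • e + t • (z - B e z • e) := fun _ => rfl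
    rw [h6]
    simp only [map_add, map_sub, map_smul, smul_eq_mul, he, hy, mul_one, sub_self, mul_zero,
      add_zero, smul_add, smul_sub, smul_smul, mul_inv_cancel₀ ht, one_smul, mul_inv_cancel_left₀ ht]
    abel
  have hdetA : cf p A = 0 := by
    have hM : (LinearMap.toMatrix' (A : (Fin p → ℝ) →ₗ[ℝ] (Fin p → ℝ))).det = 0 := by
      rw [← Matrix.exists_mulVec_eq_zero_iff]
      refine ⟨e, ?_, ?_⟩
      · rintro rfl
        simp at he
      · rw [LinearMap.toMatrix'_mulVec]
        exact hAe
    rw [Matrix.det_eq_sign_charpoly_coeff, Fintype.card_fin] at hM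
    rw [cf, cfM_eq_charpoly p le_rfl, Nat.sub_self, hM]
  have hl : Tendsto (fun t : ℝ => (prj B e + t⁻¹ • (1 - prj B e) + A).det) atTop
      (𝓝 (prj B e + A).det) := by
    have h1 : Tendsto (fun t : ℝ => prj B e + t⁻¹ • (1 - prj B e) + A) atTop
      (𝓝 (prj B e + (0 : ℝ) • (1 - prj B e) + A)) :=
      (tendsto_const_nhds.add ((tendsto_inv_atTop_zero (𝕜 := ℝ)).smul_const _)).add_const _
    rw [zero_smul, add_zero] at h1
    exact (continuous_clm_det.tendsto _).comp h1
  have hr : Tendsto (fun t : ℝ => ∑ k ∈ Finset.range p, cf k A * (t ^ k * t⁻¹ ^ (p - 1))) atTop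
      (𝓝 (∑ k ∈ Finset.range p, cf k A * (if k = p - 1 then 1 else 0))) :=
    tendsto_finsetSum _ fun k hk => (tendsto_pow_mul_inv (Finset.mem_range.1 hk)).const_mul _
  have hs : (∑ k ∈ Finset.range p, cf k A * (if k = p - 1 then (1 : ℝ) else 0)) = cf (p - 1) A := by
    simp only [mul_ite, mul_one, mul_zero, Finset.sum_ite_eq', Finset.mem_range]
    rw [if_pos (by omega)]
  rw [hs] at hr
  refine tendsto_nhds_unique hl (hr.congr' ?_)
  filter_upwards [eventually_gt_atTop 0] with t ht
  have h3 := hid t ht.ne'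
  rw [det_one_add_cf, Finset.sum_range_succ, hdetA, zero_mul, add_zero] at h3
  have h4 : t⁻¹ ^ (p - 1) * t ^ (p - 1) = 1 := by
    rw [← mul_pow, inv_mul_cancel₀ ht.ne', one_pow]
  calc _ = t⁻¹ ^ (p - 1) * ∑ k ∈ Finset.range p, cf k A * t ^ k := by
        rw [Finset.mul_sum]
        exact Finset.sum_congr rfl fun i _ => by ring
    _ = _ := by rw [h3, ← mul_assoc, h4, one_mul]

section Analytic
variable {α : Type*} [MeasurableSpace α] {μ : Measure α}

lemma norm_gauss_le {L q a : ℝ} {z : ℂ} (ha0 : 0 ≤ a) (haL : a ≤ L * q) (hq : 0 ≤ q)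
    (hz : L * z.im ^ 2 ≤ 1 / 2) :
    ‖Complex.exp (-((q : ℂ) + z ^ 2 * a))‖ ≤ Real.exp (-(q / 2)) := by
  rw [Complex.norm_exp]
  apply Real.exp_le_exp.2
  have h1 : (-((q : ℂ) + z ^ 2 * a)).re = -(q + (z.re ^ 2 - z.im ^ 2) * a) := by
    simp [pow_two]
  rw [h1]
  have h2 : z.im ^ 2 * a ≤ z.im ^ 2 * (L * q) := by gcongr
  have h3 : 0 ≤ z.re ^ 2 * a := by positivity
  nlinarith

lemma analytic_extend {n : ℕ} (q a : α → ℝ) (c : ℕ → α → ℝ) (L C : ℝ)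
    (hL : 0 < L) (hC : 0 ≤ C)
    (hqm : Measurable q) (ham : Measurable a) (hcm : ∀ k < n, Measurable (c k))
    (hq : ∀ x, 0 ≤ q x) (ha0 : ∀ x, 0 ≤ a x) (haL : ∀ x, a x ≤ L * q x)
    (hc : ∀ k < n, ∀ x, |c k x| ≤ C)
    (hint : ∀ b : ℝ, 0 < b → Integrable (fun x => Real.exp (-(b * q x))) μ)
    (G ε : ℝ) (hε : 0 < ε)
    (hG : ∀ t : ℝ, |t| < ε → ∫ x, Real.exp (-(q x + t ^ 2 * a x)) *
      (∑ k ∈ Finset.range n, c k x * t ^ k) ∂μ = G) (t : ℝ) :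
    ∫ x, Real.exp (-(q x + t ^ 2 * a x)) * (∑ k ∈ Finset.range n, c k x * t ^ k) ∂μ = G := by
  let F : ℂ → α → ℂ := fun z x =>
    Complex.exp (-((q x : ℂ) + z ^ 2 * a x)) * ∑ k ∈ Finset.range n, (c k x : ℂ) * z ^ k
  let F' : ℂ → α → ℂ := fun z x =>
    Complex.exp (-((q x : ℂ) + z ^ 2 * a x)) * (-(2 * z * a x)) *
      (∑ k ∈ Finset.range n, (c k x : ℂ) * z ^ k) +
    Complex.exp (-((q x : ℂ) + z ^ 2 * a x)) *
      (∑ k ∈ Finset.range n, (c k x : ℂ) * (k * z ^ (k - 1)))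
  let U : Set ℂ := {z | L * z.im ^ 2 < 1 / 2}
  have hcm' : ∀ z : ℂ, ∀ k ∈ Finset.range n, Measurable (fun x => (c k x : ℂ) * z ^ k) :=
    fun z k hk => (Complex.measurable_ofReal.comp (hcm k (Finset.mem_range.1 hk))).mul_const _
  have hcm'' : ∀ z : ℂ, ∀ k ∈ Finset.range n,
      Measurable (fun x => (c k x : ℂ) * (k * z ^ (k - 1))) :=
    fun z k hk => (Complex.measurable_ofReal.comp (hcm k (Finset.mem_range.1 hk))).mul_const _
  have hFm : ∀ z, Measurable (F z) := fun z =>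
    (by fun_prop : Measurable fun x => Complex.exp (-((q x : ℂ) + z ^ 2 * a x))).mul
      (Finset.measurable_fun_sum _ (hcm' z))
  have hF'm : ∀ z, Measurable (F' z) := fun z =>
    ((by fun_prop : Measurable fun x => Complex.exp (-((q x : ℂ) + z ^ 2 * a x)) *
      (-(2 * z * a x))).mul (Finset.measurable_fun_sum _ (hcm' z))).add
    ((by fun_prop : Measurable fun x => Complex.exp (-((q x : ℂ) + z ^ 2 * a x))).mul
      (Finset.measurable_fun_sum _ (hcm'' z)))
  have hUo : IsOpen U := isOpen_lt (by fun_prop) continuous_const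
  have hsum1 : ∀ (R : ℝ) (z : ℂ), ‖z‖ ≤ R → ∀ x,
      ‖∑ k ∈ Finset.range n, (c k x : ℂ) * z ^ k‖ ≤ ∑ k ∈ Finset.range n, C * R ^ k := by
    intro R z hz x
    refine norm_sum_le_of_le _ fun k hk => ?_
    rw [norm_mul, norm_pow, Complex.norm_real]
    gcongr
    exact hc k (Finset.mem_range.1 hk) x
  have hsum2 : ∀ (R : ℝ) (z : ℂ), ‖z‖ ≤ R → ∀ x,
      ‖∑ k ∈ Finset.range n, (c k x : ℂ) * (k * z ^ (k - 1))‖ ≤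
        ∑ k ∈ Finset.range n, C * (k * R ^ (k - 1)) := by
    intro R z hz x
    refine norm_sum_le_of_le _ fun k hk => ?_
    rw [norm_mul, norm_mul, norm_pow, Complex.norm_real, Complex.norm_natCast]
    gcongr
    exact hc k (Finset.mem_range.1 hk) x
  have hderiv : ∀ z x, HasDerivAt (fun z => F z x) (F' z x) z := by
    intro z x
    have h1 : HasDerivAt (fun z : ℂ => Complex.exp (-((q x : ℂ) + z ^ 2 * a x)))
        (Complex.exp (-((q x : ℂ) + z ^ 2 * a x)) * (-(2 * z * a x))) z := by
      have : HasDerivAt (fun z : ℂ => (-((q x : ℂ) + z ^ 2 * a x))) (-(2 * z * a x)) z := by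
        have h := (((hasDerivAt_pow 2 z).mul_const (a x : ℂ)).const_add (q x : ℂ)).fun_neg
        exact h.congr_deriv (by norm_num)
      exact this.cexp
    have h2 : HasDerivAt (fun z : ℂ => ∑ k ∈ Finset.range n, (c k x : ℂ) * z ^ k)
        (∑ k ∈ Finset.range n, (c k x : ℂ) * (k * z ^ (k - 1))) z := by
      refine HasDerivAt.fun_sum fun k _ => ?_
      exact (hasDerivAt_pow k z).const_mul _
    exact h1.mul h2
  have hdiff : DifferentiableOn ℂ (fun z => ∫ x, F z x ∂μ) U := by
    intro z₀ hz₀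
    let R := ‖z₀‖ + 1
    have hR : 0 ≤ R := by positivity
    let S := ∑ k ∈ Finset.range n, C * R ^ k
    let S' := ∑ k ∈ Finset.range n, C * (k * R ^ (k - 1))
    have hS : 0 ≤ S := Finset.sum_nonneg fun k _ => by positivity
    have hS' : 0 ≤ S' := Finset.sum_nonneg fun k _ => by positivity
    have hnhds : U ∩ Metric.ball z₀ 1 ∈ 𝓝 z₀ :=
      inter_mem (hUo.mem_nhds hz₀) (Metric.ball_mem_nhds _ one_pos)
    have hRz : ∀ z ∈ U ∩ Metric.ball z₀ 1, ‖z‖ ≤ R := by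
      intro z hz
      have h1 : ‖z - z₀‖ < 1 := by simpa [dist_eq_norm] using hz.2
      have h2 : ‖z‖ ≤ ‖z₀‖ + ‖z - z₀‖ := by
        simpa using norm_add_le z₀ (z - z₀)
      simp only [R]; linarith
    have hmem : z₀ ∈ U ∩ Metric.ball z₀ 1 := mem_of_mem_nhds hnhds
    have key := hasDerivAt_integral_of_dominated_loc_of_deriv_le (μ := μ) (F := F) (F' := F')
      (x₀ := z₀) (bound := fun x => (2 * R * L * 4 * S + S') * Real.exp (-(1 / 4 * q x))) hnhds
      (Eventually.of_forall fun z => (hFm z).aestronglyMeasurable) ?_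
      (hF'm z₀).aestronglyMeasurable (Eventually.of_forall ?_)
      ((hint _ (by norm_num)).const_mul _)
      (Eventually.of_forall fun x z _ => hderiv z x)
    · exact key.2.differentiableAt.differentiableWithinAt
    · refine ((hint (1 / 2) (by norm_num)).const_mul S).mono' (hFm z₀).aestronglyMeasurable
        (Eventually.of_forall fun x => ?_)
      rw [norm_mul, mul_comm]
      refine mul_le_mul (hsum1 R z₀ (hRz z₀ hmem) x) ?_ (norm_nonneg _) hS
      refine (norm_gauss_le (ha0 x) (haL x) (hq x) hz₀.le).trans (le_of_eq ?_)
      congr 1; ring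
    · intro x z hz
      have e1 := norm_gauss_le (ha0 x) (haL x) (hq x) hz.1.le
      have e2 : Real.exp (-(q x / 2)) = Real.exp (-(1 / 4 * q x)) * Real.exp (-(q x / 4)) := by
        rw [← Real.exp_add]; congr 1; ring
      have e3 : Real.exp (-(q x / 2)) ≤ Real.exp (-(1 / 4 * q x)) := by
        apply Real.exp_le_exp.2
        linarith [hq x]
      have e4 : q x * Real.exp (-(q x / 4)) ≤ 4 := by
        rw [Real.exp_neg, ← div_eq_mul_inv, div_le_iff₀ (Real.exp_pos _)]
        linarith [Real.add_one_le_exp (q x / 4)]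
      have e5 : ‖-(2 * z * (a x : ℂ))‖ ≤ 2 * R * (L * q x) := by
        rw [norm_neg, norm_mul, norm_mul, Complex.norm_real, Complex.norm_ofNat,
          Real.norm_eq_abs, abs_of_nonneg (ha0 x)]
        have := hRz z hz
        have := haL x
        have := ha0 x
        gcongr
      have hqx := hq x
      calc ‖F' z x‖ ≤ Real.exp (-(q x / 2)) * (2 * R * (L * q x)) * S +
            Real.exp (-(q x / 2)) * S' := by
            refine (norm_add_le _ _).trans (add_le_add ?_ ?_)
            · rw [norm_mul, norm_mul]
              gcongr
              exact hsum1 R z (hRz z hz) x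
            · rw [norm_mul]
              gcongr
              exact hsum2 R z (hRz z hz) x
        _ ≤ _ := by
            have h6 : Real.exp (-(q x / 2)) * (2 * R * (L * q x)) * S =
              2 * R * L * S * Real.exp (-(1 / 4 * q x)) * (q x * Real.exp (-(q x / 4))) := by
              rw [e2]; ring
            rw [h6]
            have h7 : 2 * R * L * S * Real.exp (-(1 / 4 * q x)) * (q x * Real.exp (-(q x / 4))) ≤
              2 * R * L * S * Real.exp (-(1 / 4 * q x)) * 4 := by gcongr
            have h8 : Real.exp (-(q x / 2)) * S' ≤ Real.exp (-(1 / 4 * q x)) * S' := by gcongr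
            calc _ ≤ _ := add_le_add h7 h8
              _ = _ := by ring
  have hreal : ∀ t : ℝ, ∫ x, F t x ∂μ = ((∫ x, Real.exp (-(q x + t ^ 2 * a x)) *
      (∑ k ∈ Finset.range n, c k x * t ^ k) ∂μ : ℝ) : ℂ) := by
    intro t
    rw [← integral_complex_ofReal]
    congr 1
    ext x
    simp only [F]
    push_cast
    rfl
  have hUc : IsPreconnected U := by
    apply Convex.isPreconnected
    have : U = Complex.imCLM ⁻¹' {y : ℝ | L * y ^ 2 < 1 / 2} := rfl
    rw [this]
    refine Convex.linear_preimage (f := Complex.imCLM.toLinearMap) ?_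
    have hconv : ConvexOn ℝ Set.univ (fun y : ℝ => L * y ^ 2) :=
      (even_two.convexOn_pow).smul hL.le
    simpa using hconv.convex_lt (1 / 2)
  have hmem : ∀ t : ℝ, (t : ℂ) ∈ U := fun t => by simp [U]
  have hfreq : ∃ᶠ z in 𝓝[≠] ((0 : ℝ) : ℂ), (fun z => ∫ x, F z x ∂μ) z = (fun _ => (G : ℂ)) z := by
    have htend : Tendsto (fun t : ℝ => (t : ℂ)) (𝓝[≠] 0) (𝓝[≠] ((0 : ℝ) : ℂ)) := by
      refine tendsto_nhdsWithin_iff.2 ⟨?_, ?_⟩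
      · exact (Complex.continuous_ofReal.tendsto 0).mono_left nhdsWithin_le_nhds
      · filter_upwards [self_mem_nhdsWithin] with t ht
        simpa using ht
    refine htend.frequently (Eventually.frequently ?_)
    have : ∀ᶠ t : ℝ in 𝓝[≠] 0, |t| < ε := by
      refine nhdsWithin_le_nhds ?_
      filter_upwards [Metric.ball_mem_nhds (0 : ℝ) hε] with t ht
      simpa using ht
    filter_upwards [this] with t ht
    rw [hreal, hG t ht]
  have := (hdiff.analyticOnNhd hUo).eqOn_of_preconnected_of_frequently_eq
    (g := fun _ => (G : ℂ)) (analyticOnNhd_const) hUc (hmem 0) hfreq (hmem t)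
  simp only [hreal] at this
  exact_mod_cast this

end Analytic

/-- A degree-one homogenised tangent field. -/
structure TField {p : ℕ} (B : (Fin p → ℝ) →ₗ[ℝ] (Fin p → ℝ) →ₗ[ℝ] ℝ)
    (u : (Fin p → ℝ) → (Fin p → ℝ)) : Prop where
  pd : PDForm B
  hom : ∀ (c : ℝ) (x : Fin p → ℝ), u (c • x) = |c| • u x
  diff : ∀ x, x ≠ 0 → DifferentiableAt ℝ u x
  cont : ContinuousOn (fderiv ℝ u) {0}ᶜ
  tan : ∀ x, B (u x) x = 0

namespace TField
variable {p : ℕ} {B : (Fin p → ℝ) →ₗ[ℝ] (Fin p → ℝ) →ₗ[ℝ] ℝ} {u : (Fin p → ℝ) → (Fin p → ℝ)}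

lemma zero (h : TField B u) : u 0 = 0 := by
  simpa using h.hom 0 0

lemma fderiv_hom (h : TField B u) (c : ℝ) (hc : c ≠ 0) (x : Fin p → ℝ) (hx : x ≠ 0) :
    fderiv ℝ u (c • x) = (|c| / c) • fderiv ℝ u x := by
  have h1 : HasFDerivAt (fun y => u (c • y))
      ((fderiv ℝ u (c • x)).comp (c • ContinuousLinearMap.id ℝ (Fin p → ℝ))) x := by
    have hd := (h.diff (c • x) (smul_ne_zero hc hx)).hasFDerivAt
    exact hd.comp x ((hasFDerivAt_id x).const_smul c)
  have h2 : HasFDerivAt (fun y => u (c • y)) (|c| • fderiv ℝ u x) x := by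
    simp only [h.hom]
    exact (h.diff x hx).hasFDerivAt.const_smul |c|
  have h3 := h1.unique h2
  ext1 y
  have h4 := congrArg (fun L => L y) h3
  simp only [ContinuousLinearMap.comp_apply, smul_apply, ContinuousLinearMap.id_apply,
    map_smul] at h4
  rw [smul_apply, div_eq_inv_mul, mul_smul, ← h4, smul_smul, inv_mul_cancel₀ hc, one_smul]

lemma sphere_sub : Metric.sphere (0 : Fin p → ℝ) 1 ⊆ {0}ᶜ := by
  intro x hx h0
  simp at hx h0
  simp [h0] at hx

lemma bound (h : TField B u) (F : ((Fin p → ℝ) →L[ℝ] (Fin p → ℝ)) → ℝ) (hF : Continuous F) :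
    ∃ C, 0 ≤ C ∧ ∀ x, |F (fderiv ℝ u x)| ≤ C := by
  have hcont : ContinuousOn (fun x => F (fderiv ℝ u x)) (Metric.sphere (0 : Fin p → ℝ) 1) :=
    hF.comp_continuousOn (h.cont.mono sphere_sub)
  obtain ⟨C, hC⟩ := (isCompact_sphere (0 : Fin p → ℝ) 1).exists_bound_of_continuousOn hcont
  refine ⟨max C |F (fderiv ℝ u 0)|, le_max_of_le_right (abs_nonneg _), fun x => ?_⟩
  by_cases hx : x = 0
  · rw [hx]; exact le_max_right _ _
  · refine le_max_of_le_left ?_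
    have hn : 0 < ‖x‖ := norm_pos_iff.2 hx
    have := hC (‖x‖⁻¹ • x) (by simp [norm_smul, hn.ne'])
    rw [h.fderiv_hom _ (inv_ne_zero hn.ne') _ hx, abs_of_pos (inv_pos.2 hn),
      div_self (inv_ne_zero hn.ne'), one_smul] at this
    exact this

lemma contOn (h : TField B u) : ContinuousOn u {0}ᶜ :=
  fun x hx => (h.diff x hx).continuousAt.continuousWithinAt

lemma norm_le (h : TField B u) : ∃ C, 0 ≤ C ∧ ∀ x, ‖u x‖ ≤ C * ‖x‖ := by
  obtain ⟨C, hC⟩ := (isCompact_sphere (0 : Fin p → ℝ) 1).exists_bound_of_continuousOn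
    (h.contOn.mono sphere_sub)
  refine ⟨max C 0, le_max_right _ _, fun x => ?_⟩
  by_cases hx : x = 0
  · simp [hx, h.zero]
  · have hn : 0 < ‖x‖ := norm_pos_iff.2 hx
    have := hC (‖x‖⁻¹ • x) (by simp [norm_smul, hn.ne'])
    rw [h.hom, norm_smul, Real.norm_eq_abs, abs_abs, abs_of_pos (inv_pos.2 hn),
      inv_mul_le_iff₀ hn, mul_comm] at this
    exact this.trans (by gcongr; exact le_max_left _ _)

lemma lipschitz (h : TField B u) : ∃ K, 0 ≤ K ∧ ∀ x y, ‖u x - u y‖ ≤ K * ‖x - y‖ := by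
  obtain ⟨C, hC0, hC⟩ := h.norm_le
  obtain ⟨D, hD0, hD⟩ := h.bound (fun A => ‖A‖) continuous_norm
  refine ⟨max C D, le_max_of_le_left hC0, fun x y => ?_⟩
  by_cases hseg : (0 : Fin p → ℝ) ∈ segment ℝ x y
  · have hd : ‖x‖ + ‖y‖ = ‖x - y‖ := by
      have := dist_add_dist_of_mem_segment hseg
      simpa [dist_eq_norm] using this
    calc ‖u x - u y‖ ≤ ‖u x‖ + ‖u y‖ := norm_sub_le _ _
      _ ≤ C * ‖x‖ + C * ‖y‖ := add_le_add (hC x) (hC y)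
      _ = C * ‖x - y‖ := by rw [← hd]; ring
      _ ≤ _ := by gcongr; exact le_max_left _ _
  · have := (convex_segment x y).norm_image_sub_le_of_norm_hasFDerivWithin_le (𝕜 := ℝ) (f := u)
      (f' := fderiv ℝ u) (C := D)
      (fun z hz => ((h.diff z (fun h0 => hseg (h0 ▸ hz))).hasFDerivAt).hasFDerivWithinAt)
      (fun z _ => by simpa using hD z) (right_mem_segment ℝ x y) (left_mem_segment ℝ x y)
    exact this.trans (by gcongr; exact le_max_right _ _)

lemma continuous (h : TField B u) : Continuous u := by
  obtain ⟨K, hK, hl⟩ := h.lipschitz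
  refine (LipschitzWith.of_dist_le_mul (K := ⟨K, hK⟩) fun x y => ?_).continuous
  rw [dist_eq_norm, dist_eq_norm]
  exact hl x y

lemma q_le (h : TField B u) : ∃ L > 0, ∀ x, B (u x) (u x) ≤ L * B x x := by
  obtain ⟨C, hC0, hC⟩ := h.norm_le
  obtain ⟨m, hm, hml⟩ := h.pd.lower
  obtain ⟨M, hM, hMu⟩ := PDForm.upper B
  refine ⟨(M * C ^ 2 + 1) / m, by positivity, fun x => ?_⟩
  have h1 : B (u x) (u x) ≤ M * (C * ‖x‖) ^ 2 := (hMu _).trans (by gcongr; exact hC x)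
  have h2 : (M * C ^ 2 + 1) / m * (m * ‖x‖ ^ 2) ≤ (M * C ^ 2 + 1) / m * B x x := by
    gcongr; exact hml x
  have h3 : (M * C ^ 2 + 1) / m * (m * ‖x‖ ^ 2) = (M * C ^ 2 + 1) * ‖x‖ ^ 2 := by field_simp
  nlinarith [sq_nonneg ‖x‖]

lemma cf_bound (h : TField B u) :
    ∃ C, 0 ≤ C ∧ ∀ k < p + 1, ∀ x, |cf k (fderiv ℝ u x)| ≤ C := by
  have : ∀ k : Fin (p + 1), ∃ C, 0 ≤ C ∧ ∀ x, |cf k (fderiv ℝ u x)| ≤ C := fun k =>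
    h.bound (fun A => cf k A) (continuous_cf k (by omega))
  choose C hC0 hC using this
  refine ⟨∑ k, C k, Finset.sum_nonneg fun k _ => hC0 k, fun k hk x => ?_⟩
  exact (hC ⟨k, hk⟩ x).trans
    (Finset.single_le_sum (f := C) (fun i _ => hC0 i) (Finset.mem_univ (⟨k, hk⟩ : Fin (p + 1))))

lemma cf_zero (A : (Fin p → ℝ) →L[ℝ] (Fin p → ℝ)) : cf 0 A = 1 := by
  have := det_one_add_cf A 0
  rw [Finset.sum_eq_single 0] at this
  · rw [zero_smul, add_zero] at this
    rw [← mul_one (cf 0 A), ← pow_zero (0 : ℝ), ← this, ContinuousLinearMap.det]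
    exact LinearMap.det_id
  · intro k _ hk
    rw [zero_pow hk, mul_zero]
  · simp

lemma det_pos (h : TField B u) : ∃ ε > 0, ∀ t : ℝ, |t| < ε → ∀ x,
    0 < (1 + t • fderiv ℝ u x).det := by
  obtain ⟨C, hC0, hC⟩ := h.cf_bound
  refine ⟨1 / (p * C + 1), by positivity, fun t ht x => ?_⟩
  rw [det_one_add_cf, Finset.sum_range_succ', cf_zero]
  have hpc : 0 ≤ p * C := by positivity
  have ht1 : |t| ≤ 1 := ht.le.trans (by rw [div_le_one (by positivity)]; linarith)
  have hb : |∑ k ∈ Finset.range p, cf (k + 1) (fderiv ℝ u x) * t ^ (k + 1)| ≤ p * (C * |t|) := by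
    have : |∑ k ∈ Finset.range p, cf (k + 1) (fderiv ℝ u x) * t ^ (k + 1)| ≤
        ∑ k ∈ Finset.range p, C * |t| := by
      refine (Finset.abs_sum_le_sum_abs _ _).trans (Finset.sum_le_sum fun k hk => ?_)
      rw [abs_mul, abs_pow]
      have := hC (k + 1) (by have := Finset.mem_range.1 hk; omega) x
      have h2 : |t| ^ (k + 1) ≤ |t| := pow_le_of_le_one (abs_nonneg t) ht1 (by omega)
      gcongr
    simpa using this
  have h3 : p * (C * |t|) < 1 := by
    rw [lt_div_iff₀ (by positivity)] at ht
    rcases eq_or_lt_of_le (abs_nonneg t) with h0 | h0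
    · rw [← h0]; simp
    · nlinarith
  have := (abs_lt.1 (hb.trans_lt h3)).1
  simp only [pow_zero, mul_one]
  linarith

lemma q_map (h : TField B u) (t : ℝ) (x : Fin p → ℝ) :
    B (x + t • u x) (x + t • u x) = B x x + t ^ 2 * B (u x) (u x) := by
  have h1 := h.tan x
  have h2 := h.pd.symm x (u x)
  simp only [map_add, map_smul, LinearMap.add_apply, LinearMap.smul_apply, smul_eq_mul, h1, h2]
  ring

lemma small (h : TField B u) (hp : 1 ≤ p) : ∃ ε > 0, ∀ t : ℝ, |t| < ε →
    ∫ x, Real.exp (-(B x x + t ^ 2 * B (u x) (u x))) *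
      (∑ k ∈ Finset.range (p + 1), cf k (fderiv ℝ u x) * t ^ k) = ∫ x, Real.exp (-B x x) := by
  obtain ⟨ε, hε, hdet⟩ := h.det_pos
  obtain ⟨K, hK, hlip⟩ := h.lipschitz
  have : Nonempty (Fin p) := ⟨⟨0, hp⟩⟩
  refine ⟨min ε (1 / (K + 1)), by positivity, fun t ht => ?_⟩
  have ht1 := ht.trans_le (min_le_left _ _)
  have ht2 := ht.trans_le (min_le_right _ _)
  have htK : |t| * K < 1 := by
    rw [lt_div_iff₀ (by positivity)] at ht2
    nlinarith [abs_nonneg t]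
  let f : (Fin p → ℝ) → (Fin p → ℝ) := fun x => x + t • u x
  have happ : ApproximatesLinearOn f
      ((ContinuousLinearEquiv.refl ℝ (Fin p → ℝ) : (Fin p → ℝ) ≃L[ℝ] (Fin p → ℝ)) :
        (Fin p → ℝ) →L[ℝ] (Fin p → ℝ)) Set.univ ⟨|t| * K, by positivity⟩ := by
    intro x _ y _
    have : f x - f y - (x - y) = t • (u x - u y) := by
      simp only [f, smul_sub]; abel
    change ‖f x - f y - (x - y)‖ ≤ |t| * K * ‖x - y‖
    rw [this, norm_smul, Real.norm_eq_abs, mul_assoc]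
    gcongr
    exact hlip x y
  have hcN : (⟨|t| * K, by positivity⟩ : NNReal) <
      ‖((ContinuousLinearEquiv.refl ℝ (Fin p → ℝ)).symm : (Fin p → ℝ) →L[ℝ] (Fin p → ℝ))‖₊⁻¹ := by
    have h1 : ‖((ContinuousLinearEquiv.refl ℝ (Fin p → ℝ)).symm :
        (Fin p → ℝ) →L[ℝ] (Fin p → ℝ))‖₊ = 1 := by
      have : ((ContinuousLinearEquiv.refl ℝ (Fin p → ℝ)).symm :
        (Fin p → ℝ) →L[ℝ] (Fin p → ℝ)) = ContinuousLinearMap.id ℝ _ := rfl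
      rw [this]
      exact NNReal.eq (by simp)
    rw [h1, inv_one]
    exact htK
  have hsurj : Function.Surjective f := happ.surjective (Or.inr hcN)
  have hinj : Function.Injective f := Set.injOn_univ.1 (happ.injOn (Or.inr hcN))
  have hf0 : f 0 = 0 := by simp [f, h.zero]
  have himg : f '' {0}ᶜ = {0}ᶜ := by
    rw [Set.image_compl_eq ⟨hinj, hsurj⟩]
    simp [hf0]
  have hfd : ∀ x ∈ ({0}ᶜ : Set (Fin p → ℝ)),
      HasFDerivWithinAt f (1 + t • fderiv ℝ u x) {0}ᶜ x := by
    intro x hx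
    exact ((hasFDerivAt_id x).add ((h.diff x hx).hasFDerivAt.const_smul t)).hasFDerivWithinAt
  have hmain := integral_image_eq_integral_abs_det_fderiv_smul (volume : Measure (Fin p → ℝ))
    (measurableSet_singleton (0 : Fin p → ℝ)).compl hfd hinj.injOn (fun x => Real.exp (-B x x))
  have hae : (volume : Measure (Fin p → ℝ)).restrict {0}ᶜ = volume :=
    Measure.restrict_eq_self_of_ae_mem (by
      rw [ae_iff]
      simp)
  rw [himg, hae] at hmain
  rw [hmain]
  congr 1
  ext x
  simp only [f, h.q_map, smul_eq_mul]
  rw [abs_of_pos (hdet t ht1 x), det_one_add_cf, mul_comm]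

lemma measurable_cf (k : ℕ) (hk : k < p + 1) :
    Measurable (fun x : Fin p → ℝ => cf k (fderiv ℝ u x)) :=
  (continuous_cf k (by omega)).measurable.comp (measurable_fderiv ℝ u)

lemma continuous_q (h : TField B u) : Continuous (fun x => B (u x) (u x)) :=
  Continuous.bilinB B h.continuous h.continuous

lemma continuous_B' (B : (Fin p → ℝ) →ₗ[ℝ] (Fin p → ℝ) →ₗ[ℝ] ℝ) : Continuous (fun x => B x x) :=
  Continuous.bilinB B continuous_id continuous_id

lemma all_t (h : TField B u) (hp : 1 ≤ p) (t : ℝ) :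
    ∫ x, Real.exp (-(B x x + t ^ 2 * B (u x) (u x))) *
      (∑ k ∈ Finset.range (p + 1), cf k (fderiv ℝ u x) * t ^ k) = ∫ x, Real.exp (-B x x) := by
  obtain ⟨ε, hε, hs⟩ := h.small hp
  obtain ⟨L, hL, hLq⟩ := h.q_le
  obtain ⟨C, hC, hCb⟩ := h.cf_bound
  exact analytic_extend (fun x => B x x) (fun x => B (u x) (u x))
    (fun k x => cf k (fderiv ℝ u x)) L C hL hC (continuous_B' B).measurable
    h.continuous_q.measurable (fun k hk => measurable_cf k hk) h.pd.nonneg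
    (fun x => h.pd.nonneg _) hLq hCb (fun b hb => h.pd.integrable_gauss hb) _ ε hε hs t

end TField

/-- even coefficients -/
noncomputable def ev {p : ℕ} (k : ℕ) (A : (Fin p → ℝ) →L[ℝ] (Fin p → ℝ)) : ℝ :=
  if Even k then cf k A else 0

/-- the even part of the integrand -/
noncomputable def hh {p : ℕ} (B : (Fin p → ℝ) →ₗ[ℝ] (Fin p → ℝ) →ₗ[ℝ] ℝ)
    (u : (Fin p → ℝ) → (Fin p → ℝ)) (t : ℝ) (x : Fin p → ℝ) : ℝ :=
  Real.exp (-(B x x + t ^ 2 * B (u x) (u x))) *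
    ∑ k ∈ Finset.range p, ev k (fderiv ℝ u x) * t ^ k

lemma continuous_ev {p : ℕ} (k : ℕ) (hk : k ≤ p) :
    Continuous (fun A : (Fin p → ℝ) →L[ℝ] (Fin p → ℝ) => ev k A) := by
  unfold ev
  split_ifs
  · exact continuous_cf k hk
  · exact continuous_const

lemma ev_sign {p : ℕ} (k : ℕ) (hk : k ≤ p) (c : ℝ) (hc : |c| = 1)
    (A : (Fin p → ℝ) →L[ℝ] (Fin p → ℝ)) : ev k (c • A) = ev k A := by
  unfold ev
  split_ifs with h
  · rw [cf_smul k hk, ← h.pow_abs, hc, one_pow, one_mul]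
  · rfl

namespace TField
variable {p : ℕ} {B : (Fin p → ℝ) →ₗ[ℝ] (Fin p → ℝ) →ₗ[ℝ] ℝ} {u : (Fin p → ℝ) → (Fin p → ℝ)}

lemma continuous_w (h : TField B u) (t : ℝ) :
    Continuous (fun x => Real.exp (-(B x x + t ^ 2 * B (u x) (u x)))) :=
  Real.continuous_exp.comp ((continuous_B' B).add (h.continuous_q.const_mul (t ^ 2))).neg

lemma measurable_ev (k : ℕ) (hk : k ≤ p) :
    Measurable (fun x : Fin p → ℝ => ev k (fderiv ℝ u x)) :=
  (continuous_ev k hk).measurable.comp (measurable_fderiv ℝ u)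

lemma measurable_hh (h : TField B u) (t : ℝ) : Measurable (hh B u t) := by
  unfold hh
  refine Measurable.mul ?_ (Finset.measurable_fun_sum _ fun k hk =>
    (measurable_ev k (Finset.mem_range.1 hk).le).mul_const _)
  exact (h.continuous_w t).measurable

lemma ev_bound (h : TField B u) :
    ∃ C, 0 ≤ C ∧ ∀ k < p + 1, ∀ x, |ev k (fderiv ℝ u x)| ≤ C := by
  obtain ⟨C, hC0, hC⟩ := h.cf_bound
  refine ⟨C, hC0, fun k hk x => ?_⟩
  unfold ev
  split_ifs
  · exact hC k hk x
  · simpa using hC0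

lemma integrable_aux (h : TField B u) (g : (Fin p → ℝ) → ℝ) (hg : Measurable g) (C : ℝ)
    (hC : ∀ x, |g x| ≤ C) (t : ℝ) :
    Integrable (fun x => Real.exp (-(B x x + t ^ 2 * B (u x) (u x))) * g x) := by
  have h1 := (h.pd.integrable_gauss (a := 1) one_pos).const_mul C
  refine h1.mono' ?_ (Eventually.of_forall fun x => ?_)
  · exact ((h.continuous_w t).measurable.mul hg).aestronglyMeasurable
  · rw [norm_mul, Real.norm_eq_abs, Real.norm_eq_abs, Real.abs_exp, mul_comm]
    have : Real.exp (-(B x x + t ^ 2 * B (u x) (u x))) ≤ Real.exp (-(1 * B x x)) := by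
      apply Real.exp_le_exp.2
      have := mul_nonneg (sq_nonneg t) (h.pd.nonneg (u x))
      linarith
    exact mul_le_mul (hC x) this (Real.exp_pos _).le ((abs_nonneg _).trans (hC x))

lemma integrable_hh (h : TField B u) (t : ℝ) : Integrable (hh B u t) := by
  obtain ⟨C, hC0, hC⟩ := h.ev_bound
  refine h.integrable_aux _ (Finset.measurable_fun_sum _ fun k hk =>
    (measurable_ev k (Finset.mem_range.1 hk).le).mul_const _)
    (∑ k ∈ Finset.range p, C * |t| ^ k) (fun x => ?_) t
  refine (Finset.abs_sum_le_sum_abs _ _).trans (Finset.sum_le_sum fun k hk => ?_)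
  rw [abs_mul, abs_pow]
  gcongr
  exact hC k (by have := Finset.mem_range.1 hk; omega) x

lemma integral_hh (h : TField B u) (hp : Odd p) (t : ℝ) :
    ∫ x, hh B u t x = ∫ x, Real.exp (-B x x) := by
  have hp1 : 1 ≤ p := hp.pos
  have h1 := h.all_t hp1 t
  have h2 := h.all_t hp1 (-t)
  obtain ⟨C, hC0, hC⟩ := h.cf_bound
  have hint : ∀ t : ℝ, Integrable (fun x => Real.exp (-(B x x + t ^ 2 * B (u x) (u x))) *
      (∑ k ∈ Finset.range (p + 1), cf k (fderiv ℝ u x) * t ^ k)) := by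
    intro t
    refine h.integrable_aux _ (Finset.measurable_fun_sum _ fun k hk =>
      (measurable_cf k (Finset.mem_range.1 hk)).mul_const _)
      (∑ k ∈ Finset.range (p + 1), C * |t| ^ k) (fun x => ?_) t
    refine (Finset.abs_sum_le_sum_abs _ _).trans (Finset.sum_le_sum fun k hk => ?_)
    rw [abs_mul, abs_pow]
    gcongr
    exact hC k (Finset.mem_range.1 hk) x
  have h3 := integral_add (hint t) (hint (-t))
  have h4 : ∀ x, Real.exp (-(B x x + t ^ 2 * B (u x) (u x))) *
      (∑ k ∈ Finset.range (p + 1), cf k (fderiv ℝ u x) * t ^ k) +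
      Real.exp (-(B x x + (-t) ^ 2 * B (u x) (u x))) *
      (∑ k ∈ Finset.range (p + 1), cf k (fderiv ℝ u x) * (-t) ^ k) = 2 * hh B u t x := by
    intro x
    have h5 : ∑ k ∈ Finset.range p, ev k (fderiv ℝ u x) * t ^ k =
        ∑ k ∈ Finset.range (p + 1), ev k (fderiv ℝ u x) * t ^ k := by
      rw [Finset.sum_range_succ, ev, if_neg (Nat.not_even_iff_odd.2 hp), zero_mul, add_zero]
    unfold hh
    rw [h5, neg_sq, ← mul_add, ← Finset.sum_add_distrib, mul_left_comm,
      Finset.mul_sum _ _ (2 : ℝ)]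
    congr 1
    refine Finset.sum_congr rfl fun k _ => ?_
    unfold ev
    split_ifs with hk
    · rw [hk.neg_pow]; ring
    · rw [(Nat.not_even_iff_odd.1 hk).neg_pow]; ring
  simp only [h4] at h3
  rw [h1, h2, integral_const_mul] at h3
  linarith

lemma hh_bound (h : TField B u) (hp : 1 ≤ p) : ∃ C, 0 ≤ C ∧ ∀ t : ℝ, 1 ≤ t → ∀ x,
    |hh B u t x| ≤ C * t ^ (p - 1) * Real.exp (-(B x x + t ^ 2 * B (u x) (u x))) := by
  obtain ⟨C, hC0, hC⟩ := h.ev_bound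
  refine ⟨p * C, by positivity, fun t ht x => ?_⟩
  unfold hh
  rw [abs_mul, Real.abs_exp, mul_comm]
  gcongr
  have : ∀ k ∈ Finset.range p, |ev k (fderiv ℝ u x) * t ^ k| ≤ C * t ^ (p - 1) := by
    intro k hk
    have hk := Finset.mem_range.1 hk
    rw [abs_mul, abs_pow, abs_of_nonneg (zero_le_one.trans ht)]
    have := hC k (by omega) x
    have h2 : t ^ k ≤ t ^ (p - 1) := pow_le_pow_right₀ ht (by omega)
    gcongr
  refine (Finset.abs_sum_le_sum_abs _ _).trans ((Finset.sum_le_sum this).trans ?_)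
  simp [mul_assoc]

/-- the contribution outside of the cones vanishes -/
lemma outside (h : TField B u) (hp : 1 ≤ p) (S : Set (Fin p → ℝ)) (hS : MeasurableSet S)
    {δ : ℝ} (hδ : 0 < δ) (hl : ∀ x ∈ S, δ * B x x ≤ B (u x) (u x)) :
    Tendsto (fun t => ∫ x in S, hh B u t x) atTop (𝓝 0) := by
  obtain ⟨C, hC0, hC⟩ := h.hh_bound hp
  set G := ∫ x, Real.exp (-B x x) with hG
  have hG0 : 0 < G := h.pd.gauss_pos
  have hb : ∀ t : ℝ, 1 ≤ t → ‖∫ x in S, hh B u t x‖ ≤ (C * G / Real.sqrt δ ^ p) * t⁻¹ := by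
    intro t ht
    have ht0 : 0 < t := one_pos.trans_le ht
    have ha : 0 < t ^ 2 * δ := by positivity
    have h1 : ‖∫ x in S, hh B u t x‖ ≤
        ∫ x in S, C * t ^ (p - 1) * Real.exp (-(t ^ 2 * δ * B x x)) := by
      refine norm_integral_le_of_norm_le ((h.pd.integrable_gauss ha).const_mul _).integrableOn ?_
      refine (ae_restrict_iff' hS).2 (Eventually.of_forall fun x hx => ?_)
      refine (hC t ht x).trans ?_
      gcongr
      have := h.pd.nonneg x
      have := mul_le_mul_of_nonneg_left (hl x hx) (sq_nonneg t)
      linarith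
    have h2 : ∫ x in S, C * t ^ (p - 1) * Real.exp (-(t ^ 2 * δ * B x x)) ≤
        ∫ x, C * t ^ (p - 1) * Real.exp (-(t ^ 2 * δ * B x x)) :=
      setIntegral_le_integral ((h.pd.integrable_gauss ha).const_mul _)
        (Eventually.of_forall fun x => by positivity)
    refine h1.trans (h2.trans (le_of_eq ?_))
    rw [integral_const_mul, PDForm.gauss_scale B ha, Real.sqrt_mul (by positivity),
      Real.sqrt_sq ht0.le, ← hG, mul_pow]
    obtain ⟨n, rfl⟩ : ∃ n, p = n + 1 := ⟨p - 1, by omega⟩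
    have := (Real.sqrt_pos.2 hδ).ne'
    simp only [Nat.add_sub_cancel]
    field_simp
    ring
  refine squeeze_zero_norm' (a := fun t => (C * G / Real.sqrt δ ^ p) * t⁻¹) ?_ ?_
  · filter_upwards [eventually_ge_atTop 1] with t ht using hb t ht
  · simpa using (tendsto_inv_atTop_zero (𝕜 := ℝ)).const_mul (C * G / Real.sqrt δ ^ p)

end TField

/-- the open double cone -/
def dcone {p : ℕ} (B : (Fin p → ℝ) →ₗ[ℝ] (Fin p → ℝ) →ₗ[ℝ] ℝ) (e : Fin p → ℝ) (δ : ℝ) :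
    Set (Fin p → ℝ) :=
  {x | B (x - B e x • e) (x - B e x • e) < δ * B e x ^ 2}

lemma isOpen_dcone {p : ℕ} (B : (Fin p → ℝ) →ₗ[ℝ] (Fin p → ℝ) →ₗ[ℝ] ℝ) (e : Fin p → ℝ) (δ : ℝ) :
    IsOpen (dcone B e δ) := by
  have h1 : Continuous (fun x => B e x) := Continuous.bilinB B continuous_const continuous_id
  have h2 : Continuous (fun x => x - B e x • e) := by fun_prop
  exact isOpen_lt (Continuous.bilinB B h2 h2) (by fun_prop)

namespace PDForm
variable {p : ℕ} {B : (Fin p → ℝ) →ₗ[ℝ] (Fin p → ℝ) →ₗ[ℝ] ℝ}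

lemma q_split (h : PDForm B) {e : Fin p → ℝ} (he : B e e = 1) (x : Fin p → ℝ) :
    B (x - B e x • e) (x - B e x • e) = B x x - B e x ^ 2 := by
  have := h.symm x e
  simp only [map_sub, map_smul, LinearMap.sub_apply, LinearMap.smul_apply, smul_eq_mul, he, this]
  ring

lemma cs (h : PDForm B) (x y : Fin p → ℝ) : B y x ^ 2 ≤ B y y * B x x := by
  by_cases hy : y = 0
  · simp [hy]
  have h1 := h.nonneg (B y y • x - B y x • y)
  have hpos := h.pos y hy
  have := h.symm x y
  simp only [map_sub, map_smul, LinearMap.sub_apply, LinearMap.smul_apply, smul_eq_mul, this] at h1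
  have h2 : 0 ≤ B y y * (B y y * B x x - B y x ^ 2) := by nlinarith
  have := nonneg_of_mul_nonneg_right h2 hpos
  linarith

lemma disj_cone (h : PDForm B) {e f : Fin p → ℝ} (he : B e e = 1) (hf : B f f = 1)
    (h1 : e ≠ f) (h2 : e ≠ -f) : ∀ᶠ δ in 𝓝[>] (0 : ℝ), Disjoint (dcone B e δ) (dcone B f δ) := by
  have hs := h.symm f e
  have ha : B e f < 1 := by
    have := h.pos (e - f) (sub_ne_zero.2 h1)
    simp only [map_sub, LinearMap.sub_apply, he, hf, hs] at this
    linarith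
  have hb : -1 < B e f := by
    have := h.pos (e + f) (fun h0 => h2 (eq_neg_of_add_eq_zero_left h0))
    simp only [map_add, LinearMap.add_apply, he, hf, hs] at this
    linarith
  set d := |B e f| with hd
  have hd1 : d < 1 := abs_lt.2 ⟨hb, ha⟩
  have hd0 : 0 ≤ d := abs_nonneg _
  have hpos : 0 < (1 - d) / 2 := by linarith
  filter_upwards [Ioo_mem_nhdsGT hpos] with δ hδ
  rw [Set.disjoint_left]
  intro x hx hy
  simp only [dcone, Set.mem_ofPred_eq, h.q_split he, h.q_split hf] at hx hy
  have hq : (1 + δ) * (1 + d) ≤ 2 := by nlinarith [hδ.1, hδ.2]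
  have hq0 := h.nonneg x
  have hδ0 := hδ.1
  -- the two candidate sums
  have key : ∀ σ : ℝ, σ ^ 2 = 1 → 0 ≤ σ * (B e x * B f x) → False := by
    intro σ hσ hnn
    have hcs := h.cs x (e + σ • f)
    simp only [map_add, map_smul, LinearMap.add_apply, LinearMap.smul_apply, smul_eq_mul,
      he, hf, hs] at hcs
    have hσd : σ * B e f ≤ d := by
      rw [hd]
      have : |σ| = 1 := by
        rw [← sq_abs] at hσ
        exact (pow_eq_one_iff_of_nonneg (abs_nonneg σ) two_ne_zero).1 hσ
      calc σ * B e f ≤ |σ * B e f| := le_abs_self _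
        _ = |B e f| := by rw [abs_mul, this, one_mul]
    set a := B e x with haa
    set b := B f x with hbb
    set q := B x x with hqq
    have h3 : (a + σ * b) ^ 2 ≤ (2 + 2 * d) * q := by
      refine hcs.trans ?_
      nlinarith
    -- `a b σ ≥ q/(1+δ)` in squared form
    have h4 : q ^ 2 < ((1 + δ) * (σ * (a * b))) ^ 2 := by
      have e1 : ((1 + δ) * (σ * (a * b))) ^ 2 = ((1 + δ) * a ^ 2) * ((1 + δ) * b ^ 2) := by
        rw [mul_pow, mul_pow, hσ]; ring
      rw [e1]
      nlinarith
    have h5 : q < (1 + δ) * (σ * (a * b)) := lt_of_pow_lt_pow_left₀ 2 (by positivity) h4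
    have h6 : (a + σ * b) ^ 2 = a ^ 2 + b ^ 2 + 2 * (σ * (a * b)) := by
      linear_combination b ^ 2 * hσ
    have h7 : 4 * q < (1 + δ) * (a + σ * b) ^ 2 := by rw [h6]; nlinarith
    nlinarith
  rcases le_total 0 (B e x * B f x) with h0 | h0
  · exact key 1 (by norm_num) (by linarith)
  · exact key (-1) (by norm_num) (by linarith)

end PDForm

namespace TField
variable {p : ℕ} {B : (Fin p → ℝ) →ₗ[ℝ] (Fin p → ℝ) →ₗ[ℝ] ℝ} {u : (Fin p → ℝ) → (Fin p → ℝ)}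

lemma ne_zero_of {e : Fin p → ℝ} (he : B e e = 1) : e ≠ 0 := by
  rintro rfl
  simp at he

lemma deriv_self (h : TField B u) {e : Fin p → ℝ} (he : B e e = 1) (hu : u e = 0) :
    fderiv ℝ u e e = 0 := by
  have hd := (h.diff e (ne_zero_of he)).hasFDerivAt
  have hl : HasDerivAt (fun t : ℝ => t • e) e 1 := by
    simpa using (hasDerivAt_id (1 : ℝ)).smul_const e
  have h1 : HasDerivAt (fun t : ℝ => u (t • e)) (fderiv ℝ u e e) 1 := by
    have hd' : HasFDerivAt u (fderiv ℝ u e) ((1 : ℝ) • e) := by rwa [one_smul]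
    exact hd'.comp_hasDerivAt (1 : ℝ) hl
  have h2 : HasDerivAt (fun t : ℝ => u (t • e)) 0 1 := by
    simp only [h.hom, hu, smul_zero]
    exact hasDerivAt_const _ _
  exact h1.unique h2

lemma deriv_tan (h : TField B u) {e : Fin p → ℝ} (he : B e e = 1) (hu : u e = 0)
    (x : Fin p → ℝ) : B e (fderiv ℝ u e x) = 0 := by
  have hd := (h.diff e (ne_zero_of he)).hasFDerivAt
  have h1 := (bc B).hasFDerivAt_of_bilinear hd (hasFDerivAt_id e)
  have h2 : HasFDerivAt (fun y => bc B (u y) (id y)) (0 : (Fin p → ℝ) →L[ℝ] ℝ) e := by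
    have : (fun y => bc B (u y) (id y)) = fun _ => (0 : ℝ) := by
      ext y
      rw [bc_apply]
      exact h.tan y
    rw [this]
    exact hasFDerivAt_const _ _
  have h3 := congrArg (fun L : (Fin p → ℝ) →L[ℝ] ℝ => L x) (h1.unique h2)
  simp [hu, bc_apply] at h3
  rw [h.pd.symm]
  exact h3

lemma q_M (h : TField B u) {e : Fin p → ℝ} (he : B e e = 1) (hu : u e = 0) (x : Fin p → ℝ) :
    B ((prj B e + fderiv ℝ u e) x) ((prj B e + fderiv ℝ u e) x) =
      B e x ^ 2 + B (fderiv ℝ u e x) (fderiv ℝ u e x) := by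
  have h1 := h.deriv_tan he hu x
  have h2 := h.pd.symm (fderiv ℝ u e x) e
  rw [add_apply, prj_apply]
  simp only [map_add, map_smul, LinearMap.add_apply, LinearMap.smul_apply, smul_eq_mul, he, h1, h2]
  ring

lemma inj_of_det {M : (Fin p → ℝ) →L[ℝ] (Fin p → ℝ)} (hM : M.det ≠ 0) {x : Fin p → ℝ}
    (hx : M x = 0) : x = 0 := by
  by_contra h0
  apply hM
  rw [clm_det]
  refine Matrix.exists_mulVec_eq_zero_iff.1 ⟨x, h0, ?_⟩
  rw [LinearMap.toMatrix'_mulVec]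
  exact hx

lemma near (h : TField B u) (hp : 1 ≤ p) {e : Fin p → ℝ} (he : B e e = 1) (hu : u e = 0)
    (hcf : cf (p - 1) (fderiv ℝ u e) ≠ 0) :
    ∃ c > 0, ∀ᶠ δ in 𝓝[>] (0 : ℝ), ∀ x ∈ dcone B e δ,
      c * B (x - B e x • e) (x - B e x • e) ≤ B (u x) (u x) := by
  set A := fderiv ℝ u e with hA
  have hdet : (prj B e + A).det ≠ 0 := by
    rw [det_prj_add hp B e he A (h.deriv_self he hu) (h.deriv_tan he hu)]
    exact hcf
  obtain ⟨c0, hc0, hlow⟩ := PDForm.cone_lower Set.univ isClosed_univ (fun _ _ _ _ => trivial)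
    (fun x => B ((prj B e + A) x) ((prj B e + A) x))
    (Continuous.bilinB B (prj B e + A).continuous (prj B e + A).continuous).continuousOn
    (fun c _ x => by simp only [map_smul, LinearMap.smul_apply, smul_eq_mul]; ring)
    (fun x _ hx => h.pd.pos _ (fun h0 => hx (inj_of_det hdet h0)))
  obtain ⟨m, hm, hml⟩ := h.pd.lower
  obtain ⟨M, hM, hMu⟩ := PDForm.upper B
  have hε : 0 < Real.sqrt (c0 / (4 * M)) := Real.sqrt_pos.2 (by positivity)
  have hd := (h.diff e (ne_zero_of he)).hasFDerivAt
  rw [hasFDerivAt_iff_isLittleO_nhds_zero] at hd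
  have hd2 := hd.def hε
  obtain ⟨r, hr, hball⟩ := Metric.eventually_nhds_iff.1 hd2
  refine ⟨c0 / (4 * M), by positivity, ?_⟩
  filter_upwards [Ioo_mem_nhdsGT (show (0 : ℝ) < m * r ^ 2 by positivity)] with δ hδ x hx
  set s := B e x with hs
  set y := x - s • e with hy
  have hx' : B y y < δ * s ^ 2 := hx
  have hs0 : s ≠ 0 := by
    intro h0
    rw [h0] at hx'
    have := h.pd.nonneg y
    norm_num at hx'
    linarith
  set k := s⁻¹ • y with hk
  have hyk : y = s • k := by rw [hk, smul_smul, mul_inv_cancel₀ hs0, one_smul]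
  have hxk : x = s • (e + k) := by
    rw [smul_add, ← hyk, hy]; abel
  have hey : B e y = 0 := by
    rw [hy]
    simp only [map_sub, map_smul, smul_eq_mul, he, ← hs]
    ring
  have hek : B e k = 0 := by rw [hk, map_smul, hey, smul_zero]
  have hqy : B y y = s ^ 2 * B k k := by
    rw [hyk]; simp only [map_smul, LinearMap.smul_apply, smul_eq_mul]; ring
  have hs2 : 0 < s ^ 2 := by positivity
  have hqk : B k k < δ := by
    rw [hqy] at hx'
    nlinarith
  have hkr : ‖k‖ < r := by
    have h1 := hml k
    have h2 : ‖k‖ ^ 2 < r ^ 2 := by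
      have := hδ.2
      by_contra hcon
      push Not at hcon
      nlinarith
    exact lt_of_pow_lt_pow_left₀ 2 hr.le h2
  have hlin := hball (y := k) (by simpa using hkr)
  rw [hu, sub_zero] at hlin
  set b := u (e + k) - A k with hb
  have hqb : B b b ≤ c0 / 4 * ‖k‖ ^ 2 := by
    refine (hMu b).trans ?_
    have h1 : ‖b‖ ^ 2 ≤ (Real.sqrt (c0 / (4 * M)) * ‖k‖) ^ 2 := by gcongr
    rw [mul_pow, Real.sq_sqrt (by positivity)] at h1
    calc M * ‖b‖ ^ 2 ≤ M * (c0 / (4 * M) * ‖k‖ ^ 2) := by gcongr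
      _ = c0 / 4 * ‖k‖ ^ 2 := by field_simp
  have hqA : c0 * ‖k‖ ^ 2 ≤ B (A k) (A k) := by
    by_cases hk0 : k = 0
    · simp [hk0]
    · have := hlow k trivial hk0
      rw [h.q_M he hu, hek] at this
      simpa using this
  have hqu : c0 / 4 * ‖k‖ ^ 2 ≤ B (u (e + k)) (u (e + k)) := by
    have h1 : u (e + k) = A k + b := by rw [hb]; abel
    have h2 := h.pd.nonneg (A k + (2 : ℝ) • b)
    rw [h1]
    have h3 := h.pd.symm b (A k)
    simp only [map_add, map_smul, LinearMap.add_apply, LinearMap.smul_apply, smul_eq_mul, h3]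
      at h2 ⊢
    linarith
  have hquk : c0 / (4 * M) * B k k ≤ B (u (e + k)) (u (e + k)) := by
    refine le_trans ?_ hqu
    calc c0 / (4 * M) * B k k ≤ c0 / (4 * M) * (M * ‖k‖ ^ 2) := by gcongr; exact hMu k
      _ = c0 / 4 * ‖k‖ ^ 2 := by field_simp
  have hfin : B (u x) (u x) = s ^ 2 * B (u (e + k)) (u (e + k)) := by
    rw [hxk, h.hom]
    simp only [map_smul, LinearMap.smul_apply, smul_eq_mul]
    rw [← mul_assoc, abs_mul_abs_self]; ring
  rw [hqy, hfin]
  nlinarith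

/-- the shrinking maps -/
noncomputable def shr (B : (Fin p → ℝ) →ₗ[ℝ] (Fin p → ℝ) →ₗ[ℝ] ℝ) (e : Fin p → ℝ) (c : ℝ) :
    (Fin p → ℝ) →L[ℝ] (Fin p → ℝ) := prj B e + c • (1 - prj B e)

lemma shr_apply (e : Fin p → ℝ) (c : ℝ) (x : Fin p → ℝ) :
    shr B e c x = B e x • e + c • (x - B e x • e) := by
  simp [shr, prj_apply]

lemma B_shr {e : Fin p → ℝ} (he : B e e = 1) (c : ℝ) (x : Fin p → ℝ) :
    B e (shr B e c x) = B e x := by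
  rw [shr_apply]
  simp only [map_add, map_sub, map_smul, smul_eq_mul, he]
  ring

lemma R_shr {e : Fin p → ℝ} (he : B e e = 1) (c : ℝ) (x : Fin p → ℝ) :
    shr B e c x - B e (shr B e c x) • e = c • (x - B e x • e) := by
  rw [B_shr he, shr_apply]
  abel

lemma hh_lim (h : TField B u) (hp : Odd p) {e : Fin p → ℝ} (he : B e e = 1) (hu : u e = 0)
    (x : Fin p → ℝ) (hx : B e x ≠ 0) :
    Tendsto (fun t : ℝ => t⁻¹ ^ (p - 1) * hh B u t (shr B e t⁻¹ x)) atTop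
      (𝓝 (cf (p - 1) (fderiv ℝ u e) *
        Real.exp (-(B ((prj B e + fderiv ℝ u e) x) ((prj B e + fderiv ℝ u e) x))))) := by
  set s := B e x with hs
  set y := x - s • e with hy
  have he0 := ne_zero_of he
  have hse : s • e ≠ 0 := smul_ne_zero hx he0
  have hinv := tendsto_inv_atTop_zero (𝕜 := ℝ)
  have hT : Tendsto (fun t : ℝ => shr B e t⁻¹ x) atTop (𝓝 (s • e)) := by
    simp only [shr_apply]
    simpa using (hinv.smul_const y).const_add (s • e)
  have hq1 : Tendsto (fun t : ℝ => B (shr B e t⁻¹ x) (shr B e t⁻¹ x)) atTop (𝓝 (s ^ 2)) := by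
    have := ((continuous_B' B).tendsto (s • e)).comp hT
    have h2 : B (s • e) (s • e) = s ^ 2 := by
      simp only [map_smul, LinearMap.smul_apply, smul_eq_mul, he]; ring
    rw [h2] at this
    exact this
  have hder : fderiv ℝ u (s • e) = (|s| / s) • fderiv ℝ u e := h.fderiv_hom s hx e he0
  have hsg : |(|s| / s)| = 1 := by
    rw [abs_div, abs_abs, div_self (abs_ne_zero.2 hx)]
  have husc : ∀ t : ℝ, u (s • e + t • y) = u (s • e + t • y) - u (s • e) := by
    intro t
    rw [h.hom s e, hu, smul_zero, sub_zero]
  have hq2 : Tendsto (fun t : ℝ => t • u (shr B e t⁻¹ x)) atTop (𝓝 (fderiv ℝ u (s • e) y)) := by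
    have hd := (h.diff _ hse).hasFDerivAt
    have := hd.lim y (c := fun t : ℝ => t) (l := atTop) tendsto_norm_atTop_atTop
    refine this.congr fun t => ?_
    rw [shr_apply, ← hs, ← hy, ← husc]
  have hAy : fderiv ℝ u e y = fderiv ℝ u e x := by
    rw [hy, map_sub, map_smul, h.deriv_self he hu, smul_zero, sub_zero]
  have hq3 : Tendsto (fun t : ℝ => t ^ 2 * B (u (shr B e t⁻¹ x)) (u (shr B e t⁻¹ x))) atTop
      (𝓝 (B (fderiv ℝ u e x) (fderiv ℝ u e x))) := by
    have := ((continuous_B' B).tendsto _).comp hq2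
    have h2 : B (fderiv ℝ u (s • e) y) (fderiv ℝ u (s • e) y) =
        B (fderiv ℝ u e x) (fderiv ℝ u e x) := by
      rw [hder, smul_apply, hAy]
      simp only [map_smul, LinearMap.smul_apply, smul_eq_mul]
      rw [← mul_assoc, ← abs_mul_abs_self, hsg]; ring
    rw [h2] at this
    refine this.congr fun t => ?_
    simp only [Function.comp, map_smul, LinearMap.smul_apply, smul_eq_mul]
    ring
  have hfd : ContinuousAt (fderiv ℝ u) (s • e) :=
    h.cont.continuousAt (isOpen_compl_singleton.mem_nhds hse)
  have hsum : Tendsto (fun t : ℝ => ∑ k ∈ Finset.range p,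
      ev k (fderiv ℝ u (shr B e t⁻¹ x)) * (t ^ k * t⁻¹ ^ (p - 1))) atTop
      (𝓝 (∑ k ∈ Finset.range p, ev k (fderiv ℝ u (s • e)) * (if k = p - 1 then 1 else 0))) := by
    refine tendsto_finsetSum _ fun k hk => ?_
    have hk := Finset.mem_range.1 hk
    exact ((((continuous_ev k hk.le).tendsto _).comp (hfd.tendsto.comp hT)).mul
      (tendsto_pow_mul_inv hk))
  have hsumv : ∑ k ∈ Finset.range p, ev k (fderiv ℝ u (s • e)) * (if k = p - 1 then 1 else 0) =
      cf (p - 1) (fderiv ℝ u e) := by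
    have hp1 := hp.pos
    rw [Finset.sum_eq_single (p - 1)]
    · rw [if_pos rfl, mul_one, hder, ev_sign _ (by omega) _ hsg, ev,
        if_pos (hp.tsub_odd odd_one)]
    · intro k _ hk
      rw [if_neg hk, mul_zero]
    · intro hk
      exact absurd (Finset.mem_range.2 (by omega)) hk
  rw [hsumv] at hsum
  have hfin := ((Real.continuous_exp.tendsto _).comp (hq1.add hq3).neg).mul hsum
  rw [h.q_M he hu, ← hs, mul_comm]
  refine hfin.congr fun t => ?_
  simp only [hh, Function.comp]
  rw [mul_left_comm, Finset.mul_sum _ _ (t⁻¹ ^ (p - 1))]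
  congr 1
  refine Finset.sum_congr rfl fun k _ => ?_
  ring

/-- contribution of a cone -/
lemma inside (h : TField B u) (hp : Odd p) {e : Fin p → ℝ} (he : B e e = 1) (hu : u e = 0)
    (hcf : cf (p - 1) (fderiv ℝ u e) ≠ 0) {δ c : ℝ} (hδ : 0 < δ) (hc : 0 < c)
    (hl : ∀ x ∈ dcone B e δ, c * B (x - B e x • e) (x - B e x • e) ≤ B (u x) (u x)) :
    Tendsto (fun t => ∫ x in dcone B e δ, hh B u t x) atTop
      (𝓝 (SignType.sign (cf (p - 1) (fderiv ℝ u e)) * ∫ x, Real.exp (-B x x))) := by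
  have hp1 : 1 ≤ p := hp.pos
  set A := fderiv ℝ u e with hA
  set U := dcone B e δ with hU
  have hUm : MeasurableSet U := (isOpen_dcone B e δ).measurableSet
  have hdet : (prj B e + A).det = cf (p - 1) A :=
    det_prj_add hp1 B e he A (h.deriv_self he hu) (h.deriv_tan he hu)
  obtain ⟨C, hC0, hC⟩ := h.hh_bound hp1
  have heq : ∀ t : ℝ, 0 < t → ∫ x in U, hh B u t x =
      ∫ x, t⁻¹ ^ (p - 1) * U.indicator (hh B u t) (shr B e t⁻¹ x) := by
    intro t ht
    have hds : (shr B e t⁻¹).det = t⁻¹ ^ (p - 1) := det_shrink hp1 B e he (inv_ne_zero ht.ne')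
    have hpos : 0 < t⁻¹ ^ (p - 1) := by positivity
    rw [← integral_indicator hUm, PDForm.integral_comp_linear (shr B e t⁻¹)
      (by rw [hds]; exact hpos.ne'), hds, abs_of_pos hpos, integral_const_mul]
  have hlimval : ∫ x, cf (p - 1) A * Real.exp (-(B ((prj B e + A) x) ((prj B e + A) x))) =
      SignType.sign (cf (p - 1) A) * ∫ x, Real.exp (-B x x) := by
    rw [integral_const_mul, PDForm.integral_comp_linear (prj B e + A) (by rw [hdet]; exact hcf)
      (fun x => Real.exp (-B x x)), hdet, ← mul_assoc, sign_mul_abs]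
  rw [← hlimval]
  have hmin : 0 < min 1 c := lt_min one_pos hc
  have hdct : Tendsto (fun t : ℝ => ∫ x, t⁻¹ ^ (p - 1) * U.indicator (hh B u t) (shr B e t⁻¹ x))
      atTop (𝓝 (∫ x, cf (p - 1) A * Real.exp (-(B ((prj B e + A) x) ((prj B e + A) x))))) := by
    refine tendsto_integral_filter_of_dominated_convergence
      (fun x => C * Real.exp (-(min 1 c * B x x))) ?_ ?_
      ((h.pd.integrable_gauss hmin).const_mul C) ?_
    · refine Eventually.of_forall fun t => ?_
      have := ((h.measurable_hh t).indicator hUm).comp (shr B e t⁻¹).continuous.measurable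
      exact (this.const_mul _).aestronglyMeasurable
    · filter_upwards [eventually_ge_atTop 1] with t ht
      refine Eventually.of_forall fun x => ?_
      have ht0 : 0 < t := one_pos.trans_le ht
      by_cases hx : shr B e t⁻¹ x ∈ U
      · rw [Set.indicator_of_mem hx, norm_mul, Real.norm_eq_abs, Real.norm_eq_abs,
          abs_of_pos (by positivity)]
        have hb := hC t ht (shr B e t⁻¹ x)
        set X := shr B e t⁻¹ x with hX
        have h1 : t⁻¹ ^ (p - 1) * |hh B u t X| ≤
            C * Real.exp (-(B X X + t ^ 2 * B (u X) (u X))) := by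
          calc t⁻¹ ^ (p - 1) * |hh B u t X| ≤ t⁻¹ ^ (p - 1) *
              (C * t ^ (p - 1) * Real.exp (-(B X X + t ^ 2 * B (u X) (u X)))) := by gcongr
            _ = (t⁻¹ * t) ^ (p - 1) * (C * Real.exp (-(B X X + t ^ 2 * B (u X) (u X)))) := by
              rw [mul_pow]; ring
            _ = _ := by rw [inv_mul_cancel₀ ht0.ne', one_pow, one_mul]
        refine h1.trans ?_
        gcongr
        have h2 := hl X hx
        have h3 := h.pd.q_split he X
        rw [hX, R_shr he, ← hX] at h2 h3
        have h4 := h.pd.q_split he x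
        set y := x - B e x • e with hy
        have hy0 := h.pd.nonneg y
        have h5 : B (t⁻¹ • y) (t⁻¹ • y) = t⁻¹ ^ 2 * B y y := by
          simp only [map_smul, LinearMap.smul_apply, smul_eq_mul]; ring
        have h6 : B e X = B e x := B_shr he _ _
        rw [h5] at h2 h3
        rw [h6] at h3
        have h7 : c * B y y ≤ t ^ 2 * B (u X) (u X) := by
          have := mul_le_mul_of_nonneg_left h2 (sq_nonneg t)
          have h8 : t ^ 2 * (c * (t⁻¹ ^ 2 * B y y)) = c * B y y := by
            field_simp
          linarith
        have h9 : 0 ≤ t⁻¹ ^ 2 * B y y := by positivity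
        have h10 : min 1 c * B x x ≤ B e x ^ 2 + c * B y y := by
          have : B x x = B e x ^ 2 + B y y := by linarith
          rw [this, mul_add]
          have ha : min 1 c * B e x ^ 2 ≤ 1 * B e x ^ 2 := by gcongr; exact min_le_left _ _
          have hb : min 1 c * B y y ≤ c * B y y := by gcongr; exact min_le_right _ _
          linarith
        linarith
      · rw [Set.indicator_of_notMem hx, mul_zero, norm_zero]
        positivity
    · have hnull : ∀ᵐ x : Fin p → ℝ, B e x ≠ 0 := by
        have hsub : volume ((LinearMap.ker (B e) : Submodule ℝ (Fin p → ℝ)) : Set (Fin p → ℝ)) = 0 := by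
          apply Measure.addHaar_submodule
          intro htop
          have : e ∈ LinearMap.ker (B e) := by rw [htop]; trivial
          rw [LinearMap.mem_ker, he] at this
          exact one_ne_zero this
        rw [ae_iff]
        refine measure_mono_null (fun x hx => ?_) hsub
        simpa using hx
      filter_upwards [hnull] with x hx
      refine (h.hh_lim hp he hu x hx).congr' ?_
      have hy : Tendsto (fun t : ℝ => t⁻¹ ^ 2 * B (x - B e x • e) (x - B e x • e)) atTop (𝓝 0) := by
        simpa using ((tendsto_inv_atTop_zero (𝕜 := ℝ)).pow 2).mul_const
          (B (x - B e x • e) (x - B e x • e))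
      filter_upwards [hy.eventually_lt_const (show 0 < δ * B e x ^ 2 by positivity)] with t ht
      have hmem : shr B e t⁻¹ x ∈ U := by
        change B (_ - _) (_ - _) < _
        rw [R_shr he, B_shr he]
        simp only [map_smul, LinearMap.smul_apply, smul_eq_mul]
        linarith
      rw [Set.indicator_of_mem hmem]
  refine hdct.congr' ?_
  filter_upwards [eventually_gt_atTop 0] with t ht using (heq t ht).symm

/-- Main counting result. -/
theorem sum_sign (h : TField B u) (hp : Odd p) {N : ℕ} (e : Fin N → Fin p → ℝ)
    (he : ∀ k, B (e k) (e k) = 1) (hu : ∀ k, u (e k) = 0)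
    (hcf : ∀ k, cf (p - 1) (fderiv ℝ u (e k)) ≠ 0)
    (hdis : ∀ k l, k ≠ l → e k ≠ e l ∧ e k ≠ -e l)
    (hz : ∀ x, x ≠ 0 → u x = 0 → ∃ k, ∃ c : ℝ, x = c • e k) :
    ∑ k, (SignType.sign (cf (p - 1) (fderiv ℝ u (e k))) : ℝ) = 1 := by
  have hp1 : 1 ≤ p := hp.pos
  choose c hc hnear using fun k => h.near hp1 (he k) (hu k) (hcf k)
  have h1 : ∀ᶠ δ in 𝓝[>] (0 : ℝ), ∀ k, ∀ x ∈ dcone B (e k) δ,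
      c k * B (x - B (e k) x • e k) (x - B (e k) x • e k) ≤ B (u x) (u x) :=
    eventually_all.2 hnear
  have h2 : ∀ᶠ δ in 𝓝[>] (0 : ℝ), ∀ k l, k ≠ l →
      Disjoint (dcone B (e k) δ) (dcone B (e l) δ) := by
    refine eventually_all.2 fun k => eventually_all.2 fun l => ?_
    by_cases hkl : k = l
    · exact Eventually.of_forall fun δ hn => absurd hkl hn
    · filter_upwards [h.pd.disj_cone (he k) (he l) (hdis k l hkl).1 (hdis k l hkl).2] with δ hd _
      exact hd
  obtain ⟨δ, ⟨hδ1, hδ2⟩, hδ⟩ := ((h1.and h2).and self_mem_nhdsWithin).exists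
  have hδ0 : 0 < δ := hδ
  set U : Fin N → Set (Fin p → ℝ) := fun k => dcone B (e k) δ with hU
  have hUo : ∀ k, IsOpen (U k) := fun k => isOpen_dcone B (e k) δ
  have hWo : IsOpen (⋃ k, U k) := isOpen_iUnion hUo
  obtain ⟨m, hm, hmb⟩ := PDForm.cone_lower (⋃ k, U k)ᶜ hWo.isClosed_compl
    (fun a ha x hx => by
      intro hmem
      apply hx
      obtain ⟨k, hk⟩ := Set.mem_iUnion.1 hmem
      refine Set.mem_iUnion.2 ⟨k, ?_⟩
      change B (_ - _) (_ - _) < _ at hk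
      change B (_ - _) (_ - _) < _
      rw [h.pd.q_split (he k)] at hk ⊢
      simp only [map_smul, LinearMap.smul_apply, smul_eq_mul] at hk
      have ha2 : 0 < a ^ 2 := by positivity
      nlinarith)
    (fun x => B (u x) (u x)) h.continuous_q.continuousOn
    (fun a ha x => by
      rw [h.hom, abs_of_pos ha]
      simp only [map_smul, LinearMap.smul_apply, smul_eq_mul]; ring)
    (fun x hx hx0 => h.pd.pos _ (fun hux => by
      obtain ⟨k, a, rfl⟩ := hz x hx0 hux
      apply hx
      refine Set.mem_iUnion.2 ⟨k, ?_⟩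
      have ha : a ≠ 0 := by rintro rfl; simp at hx0
      change B (_ - _) (_ - _) < _
      rw [h.pd.q_split (he k)]
      simp only [map_smul, LinearMap.smul_apply, smul_eq_mul, he k]
      have : 0 < a ^ 2 := by positivity
      nlinarith))
  obtain ⟨M, hM, hMu⟩ := PDForm.upper B
  have hout := h.outside hp1 (⋃ k, U k)ᶜ hWo.measurableSet.compl (δ := m / M) (by positivity)
    (fun x hx => by
      by_cases hx0 : x = 0
      · simp [hx0, h.zero]
      · refine le_trans ?_ (hmb x hx hx0)
        calc m / M * B x x ≤ m / M * (M * ‖x‖ ^ 2) := by gcongr; exact hMu x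
          _ = m * ‖x‖ ^ 2 := by field_simp)
  have hin : ∀ k, _ := fun k => h.inside hp (he k) (hu k) (hcf k) hδ0 (hc k) (hδ1 k)
  have hall := (tendsto_finsetSum Finset.univ fun k _ => hin k).add hout
  have hval : ∀ t : ℝ, (∑ k, ∫ x in U k, hh B u t x) + ∫ x in (⋃ k, U k)ᶜ, hh B u t x =
      ∫ x, Real.exp (-B x x) := by
    intro t
    rw [← h.integral_hh hp t, ← integral_add_compl hWo.measurableSet (h.integrable_hh t)]
    congr 1
    rw [integral_iUnion_fintype (fun k => (hUo k).measurableSet)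
      (fun k l hkl => hδ2 k l hkl) (fun k => (h.integrable_hh t).integrableOn)]
  have hconst : Tendsto (fun _ : ℝ => ∫ x, Real.exp (-B x x)) atTop
      (𝓝 (∫ x, Real.exp (-B x x))) := tendsto_const_nhds
  have huniq := tendsto_nhds_unique (hall.congr hval) hconst
  rw [add_zero, ← Finset.sum_mul] at huniq
  have hG := h.pd.gauss_pos
  exact mul_right_cancel₀ hG.ne' (by rw [huniq, one_mul])

end TField

lemma jac_eq {p : ℕ} (v : (Fin p → ℝ) → (Fin p → ℝ)) (ω : Fin p → ℝ) :
    jacobianMatrix v ω =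
      LinearMap.toMatrix' (fderiv ℝ v ω : (Fin p → ℝ) →ₗ[ℝ] (Fin p → ℝ)) := by
  ext i j
  rw [LinearMap.toMatrix'_apply]
  rfl

lemma signJ_pos {p : ℕ} (v : (Fin p → ℝ) → (Fin p → ℝ)) (ω : Fin p → ℝ)
    (hnd : Multiset.count 0 ((jacobianMatrix v ω).charpoly.aroots ℂ) = 1) :
    0 < (signJ v ω : ℝ) * cf (p - 1) (fderiv ℝ v ω) := by
  have h := sign_charpoly (jacobianMatrix v ω) hnd
  have h1 : cf (p - 1) (fderiv ℝ v ω) = cfM (p - 1) (jacobianMatrix v ω) := by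
    rw [jac_eq]; rfl
  rw [h1]
  unfold signJ stableCount
  push_cast
  convert h

lemma signJ_cases {p : ℕ} (v : (Fin p → ℝ) → (Fin p → ℝ)) (ω : Fin p → ℝ) :
    signJ v ω = 1 ∨ signJ v ω = -1 := by
  unfold signJ
  exact neg_one_pow_eq_or ℤ _

lemma signJ_eq {p : ℕ} (v : (Fin p → ℝ) → (Fin p → ℝ)) (ω : Fin p → ℝ)
    (hnd : Multiset.count 0 ((jacobianMatrix v ω).charpoly.aroots ℂ) = 1) :
    (signJ v ω : ℝ) = (SignType.sign (cf (p - 1) (fderiv ℝ v ω)) : ℝ) := by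
  have h := signJ_pos v ω hnd
  rcases signJ_cases v ω with h1 | h1
  · rw [h1] at h ⊢
    rw [sign_pos (by simpa using h)]; simp
  · rw [h1] at h ⊢
    rw [sign_neg (by simpa using h)]; simp

lemma fderiv_hom2 {p : ℕ} {v : (Fin p → ℝ) → (Fin p → ℝ)} (hd : Differentiable ℝ v)
    (hhom : ∀ (c : ℝ) (ω : Fin p → ℝ), v (c • ω) = c ^ 2 • v ω) (c : ℝ) (hc : c ≠ 0)
    (x : Fin p → ℝ) : fderiv ℝ v (c • x) = c • fderiv ℝ v x := by
  have h1 : HasFDerivAt (fun y => v (c • y))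
      ((fderiv ℝ v (c • x)).comp (c • ContinuousLinearMap.id ℝ (Fin p → ℝ))) x :=
    (hd (c • x)).hasFDerivAt.comp x ((hasFDerivAt_id x).const_smul c)
  have h2 : HasFDerivAt (fun y => v (c • y)) (c ^ 2 • fderiv ℝ v x) x := by
    simp only [hhom]
    exact (hd x).hasFDerivAt.const_smul (c ^ 2)
  have h3 := h1.unique h2
  ext1 y
  have h4 := congrArg (fun L => L y) h3
  simp only [ContinuousLinearMap.comp_apply, smul_apply, ContinuousLinearMap.id_apply,
    map_smul] at h4
  rw [smul_apply]
  have h5 := congrArg (fun z => c⁻¹ • z) h4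
  simp only [smul_smul] at h5
  rw [inv_mul_cancel₀ hc, one_smul, pow_two, inv_mul_cancel_left₀ hc] at h5
  exact h5

/-- the rescaled field -/
noncomputable def uf {p : ℕ} (B : (Fin p → ℝ) →ₗ[ℝ] (Fin p → ℝ) →ₗ[ℝ] ℝ)
    (v : (Fin p → ℝ) → (Fin p → ℝ)) (x : Fin p → ℝ) : Fin p → ℝ :=
  (Real.sqrt (B x x))⁻¹ • v x

section
variable {p : ℕ} {B : (Fin p → ℝ) →ₗ[ℝ] (Fin p → ℝ) →ₗ[ℝ] ℝ} {v : (Fin p → ℝ) → (Fin p → ℝ)}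

lemma contDiffOn_scale (hpd : PDForm B) :
    ContDiffOn ℝ 1 (fun x => (Real.sqrt (B x x))⁻¹) {0}ᶜ := by
  have h1 : ContDiff ℝ 1 (fun x => B x x) := by
    have := (bc B).isBoundedBilinearMap.contDiff (n := 1)
    have h2 := this.comp (contDiff_id.prodMk contDiff_id)
    have h3 : (fun x => B x x) = (fun x : (Fin p → ℝ) × (Fin p → ℝ) => bc B x.1 x.2) ∘
        fun x => (id x, id x) := by
      ext x
      simp [bc_apply]
    rw [h3]
    exact h2
  refine ContDiffOn.inv (h1.contDiffOn.sqrt fun x hx => (hpd.pos x hx).ne') fun x hx => ?_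
  exact (Real.sqrt_pos.2 (hpd.pos x hx)).ne'

lemma tfield_uf (hpd : PDForm B) (hcd : ContDiff ℝ 1 v)
    (hhom : ∀ (c : ℝ) (ω : Fin p → ℝ), v (c • ω) = c ^ 2 • v ω)
    (hint : ∀ ω, B (v ω) ω = 0) : TField B (uf B v) := by
  have hcdu : ContDiffOn ℝ 1 (uf B v) {0}ᶜ := (contDiffOn_scale hpd).smul hcd.contDiffOn
  have hv0 : v 0 = 0 := by simpa using hhom 0 0
  refine ⟨hpd, fun c x => ?_, fun x hx => ?_, ?_, fun x => ?_⟩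
  · by_cases hc : c = 0
    · simp [hc, uf, hv0]
    · unfold uf
      have : B (c • x) (c • x) = c ^ 2 * B x x := by
        simp only [map_smul, LinearMap.smul_apply, smul_eq_mul]; ring
      rw [this, Real.sqrt_mul (sq_nonneg c), Real.sqrt_sq_eq_abs, hhom, smul_smul, smul_smul]
      congr 1
      rw [mul_inv, ← sq_abs c]
      have := abs_ne_zero.2 hc
      field_simp
  · exact (hcdu.differentiableOn one_ne_zero).differentiableAt
      (isOpen_compl_singleton.mem_nhds hx)
  · exact hcdu.continuousOn_fderiv_of_isOpen isOpen_compl_singleton le_rfl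
  · simp [uf, hint]

lemma fderiv_uf (hpd : PDForm B) (hcd : ContDiff ℝ 1 v) {e : Fin p → ℝ} (he : B e e = 1)
    (hv : v e = 0) : fderiv ℝ (uf B v) e = fderiv ℝ v e := by
  have he0 : e ≠ 0 := TField.ne_zero_of he
  have h1 : DifferentiableAt ℝ (fun x => (Real.sqrt (B x x))⁻¹) e :=
    ((contDiffOn_scale hpd).differentiableOn one_ne_zero).differentiableAt
      (isOpen_compl_singleton.mem_nhds he0)
  have h2 : DifferentiableAt ℝ v e := (hcd.differentiable one_ne_zero) e
  have h3 := (h1.hasFDerivAt.smul h2.hasFDerivAt).fderiv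
  ext1 x
  have h4 := congrArg (fun L => L x) h3
  simp only [hv, he, Real.sqrt_one, inv_one, one_smul, add_apply,
    ContinuousLinearMap.smulRight_apply, smul_zero, add_zero] at h4
  exact h4

end

lemma line_mem {p : ℕ} {L : Submodule ℝ (Fin p → ℝ)} (hL : Module.finrank ℝ L = 1)
    {w x : Fin p → ℝ} (hw : w ∈ L) (hw0 : w ≠ 0) (hx : x ∈ L) : ∃ c : ℝ, x = c • w := by
  obtain ⟨c, hc⟩ := exists_smul_eq_of_finrank_eq_one hL (x := (⟨w, hw⟩ : L))
    (fun h0 => hw0 (congrArg Subtype.val h0)) ⟨x, hx⟩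
  exact ⟨c, (congrArg Subtype.val hc).symm⟩

/-- (Theorem 3 of the paper.) Let `v : ℝᵖ → ℝᵖ` be `C¹` and
homogeneous of degree 2, admitting a positive definite quadratic first integral
(`B(v(ω), ω) = 0` for a symmetric positive definite bilinear form `B`).  If the
nonzero zero set of `v` is the union of finitely many punctured lines
`ℓ₁, …, ℓ_N` (distinct one-dimensional subspaces), all nondegenerate, then the sum
of the indices `i_k = j(ω_k) + j(−ω_k)` over the straight lines of steady motions
equals `1 + (−1)^{p+1}`. -/
theorem sum_of_indices_of_slsm
    (p : ℕ) (v : (Fin p → ℝ) → (Fin p → ℝ))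
    (hcd : ContDiff ℝ 1 v)
    (hhom : ∀ (c : ℝ) (ω : Fin p → ℝ), v (c • ω) = c ^ 2 • v ω)
    (B : (Fin p → ℝ) →ₗ[ℝ] (Fin p → ℝ) →ₗ[ℝ] ℝ)
    (hsymm : ∀ x y, B x y = B y x)
    (hposdef : ∀ x : Fin p → ℝ, x ≠ 0 → 0 < B x x)
    (hint : ∀ ω, B (v ω) ω = 0)
    (N : ℕ) (ℓ : Fin N → Submodule ℝ (Fin p → ℝ))
    (hdim : ∀ k, Module.finrank ℝ (ℓ k) = 1)
    (hdistinct : Function.Injective ℓ)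
    (hzeros : {ω : Fin p → ℝ | ω ≠ 0 ∧ v ω = 0} =
      ⋃ k : Fin N, ((ℓ k : Set (Fin p → ℝ)) \ {0}))
    (hnd : ∀ ω : Fin p → ℝ, ω ≠ 0 → v ω = 0 →
      Multiset.count 0 ((jacobianMatrix v ω).charpoly.aroots ℂ) = 1)
    (w : Fin N → Fin p → ℝ)
    (hw : ∀ k, w k ∈ ℓ k ∧ w k ≠ 0) :
    (∑ k : Fin N, (signJ v (w k) + signJ v (-(w k)))) = 1 + (-1 : ℤ) ^ (p + 1) := by
  have hpd : PDForm B := ⟨hsymm, hposdef⟩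
  have hd : Differentiable ℝ v := hcd.differentiable one_ne_zero
  have hvw : ∀ k, v (w k) = 0 := by
    intro k
    have : w k ∈ {ω : Fin p → ℝ | ω ≠ 0 ∧ v ω = 0} := by
      rw [hzeros]
      exact Set.mem_iUnion.2 ⟨k, (hw k).1, (hw k).2⟩
    exact this.2
  have hscale : ∀ k, ∀ c : ℝ, c ≠ 0 → (signJ v (c • w k) : ℝ) =
      SignType.sign (c ^ (p - 1) * cf (p - 1) (fderiv ℝ v (w k))) := by
    intro k c hc
    rw [signJ_eq v _ (hnd _ (smul_ne_zero hc (hw k).2) (by rw [hhom, hvw, smul_zero])),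
      fderiv_hom2 hd hhom c hc, cf_smul _ (Nat.sub_le _ _)]
  have hbase : ∀ k, (signJ v (w k) : ℝ) =
      SignType.sign (cf (p - 1) (fderiv ℝ v (w k))) := by
    intro k
    exact signJ_eq v _ (hnd _ (hw k).2 (hvw k))
  rcases Nat.even_or_odd p with hp | hp
  · rw [Finset.sum_eq_zero, hp.add_one.neg_one_pow]
    · norm_num
    intro k _
    have hp0 : p ≠ 0 := by
      rintro rfl
      exact (hw k).2 (Subsingleton.elim _ _)
    have h1 := hscale k (-1) (by norm_num)
    have hodd : Odd (p - 1) := Nat.Even.sub_odd (by omega) hp odd_one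
    rw [hodd.neg_one_pow, neg_one_mul, Left.sign_neg, neg_one_smul] at h1
    have h2 : ((signJ v (w k) + signJ v (-(w k)) : ℤ) : ℝ) = 0 := by
      push_cast
      rw [h1, hbase]
      simp
    exact_mod_cast h2
  · have hT := tfield_uf hpd hcd hhom hint
    have hq : ∀ k, 0 < Real.sqrt (B (w k) (w k)) := fun k =>
      Real.sqrt_pos.2 (hposdef _ (hw k).2)
    have hev : Even (p - 1) := hp.tsub_odd odd_one
    set e : Fin N → Fin p → ℝ := fun k => (Real.sqrt (B (w k) (w k)))⁻¹ • w k with he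
    have he1 : ∀ k, B (e k) (e k) = 1 := by
      intro k
      have h2 := Real.sq_sqrt (hposdef _ (hw k).2).le
      have h3 := (hq k).ne'
      simp only [he, map_smul, LinearMap.smul_apply, smul_eq_mul]
      rw [← h2, Real.sqrt_sq (hq k).le]
      field_simp
    have hve : ∀ k, v (e k) = 0 := fun k => by
      simp only [he]
      rw [hhom, hvw, smul_zero]
    have hel : ∀ k, e k ∈ ℓ k := fun k => (ℓ k).smul_mem _ (hw k).1
    have hsg : ∀ k, (signJ v (e k) : ℝ) = signJ v (w k) := by
      intro k
      have hc := inv_pos.2 (hq k)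
      rw [hbase k]
      simp only [he]
      rw [hscale k _ hc.ne', sign_mul, sign_pos (pow_pos hc _), one_mul]
    have hneg : ∀ k, (signJ v (-(w k)) : ℝ) = signJ v (w k) := by
      intro k
      have h1 := hscale k (-1) (by norm_num)
      rw [hev.neg_one_pow, one_mul, neg_one_smul] at h1
      rw [h1, hbase]
    have hndE : ∀ k, Multiset.count 0 ((jacobianMatrix v (e k)).charpoly.aroots ℂ) = 1 :=
      fun k => hnd _ (TField.ne_zero_of (he1 k)) (hve k)
    have hmain := hT.sum_sign hp e he1 (fun k => by rw [uf, hve, smul_zero])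
      (fun k => by
        rw [fderiv_uf hpd hcd (he1 k) (hve k)]
        intro h0
        have := signJ_pos v (e k) (hndE k)
        rw [h0, mul_zero] at this
        exact lt_irrefl _ this)
      (fun k l hkl => by
        have key : e k ∈ ℓ l → False := by
          intro hmem
          apply hkl
          apply hdistinct
          refine Submodule.eq_of_le_of_finrank_eq (fun x hx => ?_) (by rw [hdim, hdim])
          obtain ⟨c, rfl⟩ := line_mem (hdim k) (hel k) (TField.ne_zero_of (he1 k)) hx
          exact (ℓ l).smul_mem _ hmem
        refine ⟨fun h0 => key (h0 ▸ hel l), fun h0 => key (h0 ▸ (ℓ l).neg_mem (hel l))⟩)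
      (fun x hx hux => by
        have hvx : v x = 0 := by
          unfold uf at hux
          exact (smul_eq_zero.1 hux).resolve_left
            (inv_ne_zero (Real.sqrt_pos.2 (hposdef x hx)).ne')
        have : x ∈ {ω : Fin p → ℝ | ω ≠ 0 ∧ v ω = 0} := ⟨hx, hvx⟩
        rw [hzeros] at this
        obtain ⟨k, hk⟩ := Set.mem_iUnion.1 this
        exact ⟨k, line_mem (hdim k) (hel k) (TField.ne_zero_of (he1 k)) hk.1⟩)
    have hsum : ((∑ k : Fin N, signJ v (w k) : ℤ) : ℝ) = 1 := by
      rw [← hmain]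
      push_cast
      refine Finset.sum_congr rfl fun k _ => ?_
      rw [← hsg, signJ_eq v _ (hndE k), fderiv_uf hpd hcd (he1 k) (hve k)]
    have hsumZ : ∑ k : Fin N, signJ v (w k) = 1 := by exact_mod_cast hsum
    have hnegZ : ∀ k, signJ v (-(w k)) = signJ v (w k) := fun k => by exact_mod_cast hneg k
    rw [Finset.sum_add_distrib]
    simp only [hnegZ, hsumZ]
    rw [hp.add_one.neg_one_pow]
end

section
/- Let p be odd and let v : ℝ^p → ℝ^p be continuous and homogeneous of degree 2 (v(λω) = λ²v(ω) for all λ ∈ ℝ, ω ∈ ℝ^p), and suppose there is a symmetric positive definite bilinear form B on ℝ^p such that B(v(ω), ω) = 0 for all ω (the corresponding positive definite quadratic form is a first integral of ω̇ = v(ω)). Then v has a nonzero steady state: there exists ω₀ ≠ 0 with v(ω₀) = 0; in particular at least one straight line of steady motions exists. -/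
open Polynomial MeasureTheory Module

theorem hb_poly (p : ℕ) (hp : Odd p) (c δ : ℝ) (hc : 0 < c) (hδ : 0 < δ) (P : ℝ[X])
    (h : ∀ t ∈ Set.Ioo 0 δ, P.eval t = Real.sqrt (1 + t ^ 2) ^ p * c) : False := by
  have h1 : P ^ 2 = C (c ^ 2) * (X ^ 2 + 1) ^ p := by
    apply Polynomial.eq_of_infinite_eval_eq
    refine (Set.Ioo_infinite hδ).mono ?_
    intro t ht
    have h0 : (0:ℝ) ≤ 1 + t ^ 2 := by positivity
    simp only [Set.mem_ofPred_eq, eval_pow, eval_mul, eval_C, eval_add, eval_X, eval_one, h t ht]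
    rw [mul_pow, ← pow_mul, mul_comm p 2, pow_mul, Real.sq_sqrt h0]
    ring
  have h2 := congrArg (fun Q : ℝ[X] => (Q.map (algebraMap ℝ ℂ)).rootMultiplicity Complex.I) h1
  have hfac : (X ^ 2 + 1 : ℂ[X]) = (X - C Complex.I) * (X - C (-Complex.I)) := by
    have : (C Complex.I * C Complex.I : ℂ[X]) = -1 := by
      rw [← C_mul, Complex.I_mul_I]; simp
    simp only [C_neg]
    linear_combination this
  have hcc : (C ((c:ℂ) ^ 2) : ℂ[X]) ≠ 0 := by
    simp [hc.ne']
  have hx : (X ^ 2 + 1 : ℂ[X]) ≠ 0 := by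
    rw [hfac]; exact mul_ne_zero (X_sub_C_ne_zero _) (X_sub_C_ne_zero _)
  have hI : -Complex.I ≠ Complex.I := by
    intro h; have := congrArg Complex.im h; norm_num at this
  have h3 : rootMultiplicity Complex.I (X ^ 2 + 1 : ℂ[X]) = 1 := by
    rw [hfac, rootMultiplicity_mul (mul_ne_zero (X_sub_C_ne_zero _) (X_sub_C_ne_zero _)),
      rootMultiplicity_X_sub_C_self, rootMultiplicity_X_sub_C, if_neg (fun h => hI h.symm)]
  simp only [Polynomial.map_pow, Polynomial.map_mul, Polynomial.map_add, Polynomial.map_one,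
    map_X, map_C] at h2
  simp only [← count_roots, roots_pow, Multiset.count_nsmul] at h2 h3
  rw [map_pow, show (algebraMap ℝ ℂ) c = (c:ℂ) from rfl, roots_C_mul _ (by simp [hc.ne']),
    roots_pow, Multiset.count_nsmul, h3] at h2
  obtain ⟨k, rfl⟩ := hp
  lia

theorem hb_det {E : Type*} [NormedAddCommGroup E] [NormedSpace ℝ E] [FiniteDimensional ℝ E]
    (A : E →L[ℝ] E) : ∃ P : ℝ[X], P.natDegree ≤ finrank ℝ E ∧
      ∀ t : ℝ, P.eval t = (1 + t • A : E →L[ℝ] E).det := by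
  classical
  let b := Module.finBasis ℝ E
  let M := LinearMap.toMatrix b b (A : E →ₗ[ℝ] E)
  refine ⟨Matrix.det ((X : ℝ[X]) • M.map C + (1 : Matrix _ _ ℝ).map C), ?_, ?_⟩
  · simpa using natDegree_det_X_add_C_le M 1
  · intro t
    rw [ContinuousLinearMap.det, ← LinearMap.det_toMatrix b, ← Polynomial.coe_evalRingHom,
      RingHom.map_det]
    congr 1
    have : ((1 + t • A : E →L[ℝ] E) : E →ₗ[ℝ] E) = LinearMap.id + t • (A : E →ₗ[ℝ] E) := by
      ext; simp
    rw [this, map_add (LinearMap.toMatrix b b), map_smul (LinearMap.toMatrix b b), LinearMap.toMatrix_id]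
    ext i j
    by_cases hij : i = j <;> simp [M, hij, add_comm] <;> exact mul_comm _ _

theorem hb_det_pos {E : Type*} [NormedAddCommGroup E] [NormedSpace ℝ E] [FiniteDimensional ℝ E]
    (A : E →L[ℝ] E) (K : ℝ) (hA : ‖A‖ ≤ K) (t : ℝ) (ht : 0 ≤ t) (htK : t * K < 1) :
    0 < (1 + t • A : E →L[ℝ] E).det := by
  obtain ⟨P, -, hP⟩ := hb_det A
  have hne : ∀ s ∈ Set.Icc 0 t, P.eval s ≠ 0 := by
    intro s hs h0
    rw [hP, ContinuousLinearMap.det] at h0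
    have hb := LinearMap.bot_lt_ker_of_det_eq_zero h0
    obtain ⟨x, hx, hx0⟩ := (Submodule.ne_bot_iff _).1 hb.ne'
    have hx1 : x + s • A x = 0 := by simpa using hx
    have hx2 : ‖x‖ = ‖s • A x‖ := by
      rw [← norm_neg (s • A x), ← eq_neg_of_add_eq_zero_left hx1]
    rw [norm_smul, Real.norm_of_nonneg hs.1] at hx2
    have hx3 : ‖A x‖ ≤ K * ‖x‖ := (A.le_opNorm x).trans (by gcongr)
    have hxp : 0 < ‖x‖ := norm_pos_iff.2 hx0
    have hK : 0 ≤ K := (norm_nonneg _).trans hA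
    have : s * ‖A x‖ ≤ t * (K * ‖x‖) := mul_le_mul hs.2 hx3 (norm_nonneg _) ht
    nlinarith
  by_contra hcon
  rw [← hP] at hcon
  have h0 : P.eval 0 = 1 := by
    rw [hP]; simp [ContinuousLinearMap.det]
  have := intermediate_value_Icc' ht (f := fun s => P.eval s) P.continuous.continuousOn
  obtain ⟨s, hs, hs0⟩ := this ⟨not_lt.1 hcon, by simp [h0]⟩
  exact hne s hs hs0

theorem hb_bij {E : Type*} [NormedAddCommGroup E] [NormedSpace ℝ E] [FiniteDimensional ℝ E]
    [Nontrivial E]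
    (w : E → E) (K : NNReal) (hw : LipschitzWith K w) (t : ℝ) (ht : 0 ≤ t) (htK : t * K < 1) :
    Function.Bijective (fun x => x + t • w x) := by
  have hf : ApproximatesLinearOn (fun x => x + t • w x)
      ((ContinuousLinearEquiv.refl ℝ E : E ≃L[ℝ] E) : E →L[ℝ] E) Set.univ (t.toNNReal * K) := by
    intro x _ y _
    have := hw.norm_sub_le x y
    simp only [ContinuousLinearEquiv.coe_refl, ContinuousLinearMap.coe_id', id]
    rw [show x + t • w x - (y + t • w y) - (x - y) = t • (w x - w y) by
      rw [smul_sub]; abel, norm_smul, Real.norm_of_nonneg ht]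
    simp only [NNReal.coe_mul, Real.coe_toNNReal _ ht]
    rw [mul_assoc]
    gcongr
  have hc : (t.toNNReal * K) < ‖((ContinuousLinearEquiv.refl ℝ E).symm : E →L[ℝ] E)‖₊⁻¹ := by
    have : ‖((ContinuousLinearEquiv.refl ℝ E).symm : E →L[ℝ] E)‖₊ = 1 := by
      ext; simp
    rw [this, inv_one, ← NNReal.coe_lt_coe]
    simpa [Real.coe_toNNReal _ ht] using htK
  exact ⟨Set.injOn_univ.1 (hf.injOn (Or.inr hc)), hf.surjective (Or.inr hc)⟩

theorem hb_vol {E : Type*} [NormedAddCommGroup E] [InnerProductSpace ℝ E] [FiniteDimensional ℝ E]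
    [MeasurableSpace E] [BorelSpace E] (μ : Measure E) [μ.IsAddHaarMeasure]
    [Nontrivial E]
    (w : E → E) (K : NNReal) (hw : LipschitzWith K w) (hd : ∀ x, x ≠ 0 → DifferentiableAt ℝ w x)
    (hn : ∀ x, ‖w x‖ = ‖x‖) (ho : ∀ x, inner ℝ x (w x) = 0)
    (t : ℝ) (ht : 0 ≤ t) (htK : t * K < 1) :
    IntegrableOn (fun x => (1 + t • fderiv ℝ w x : E →L[ℝ] E).det) (Metric.ball 0 1 \ {0}) μ ∧
    ∫ x in Metric.ball 0 1 \ {0}, (1 + t • fderiv ℝ w x : E →L[ℝ] E).det ∂μ =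
      Real.sqrt (1 + t ^ 2) ^ finrank ℝ E * μ.real (Metric.ball 0 1) := by
  set s : Set E := Metric.ball 0 1 \ {0} with hs
  set f : E → E := fun x => x + t • w x with hf
  have hbij := hb_bij w K hw t ht htK
  have hms : MeasurableSet s := Metric.isOpen_ball.measurableSet.diff (measurableSet_singleton 0)
  have hr : 0 < Real.sqrt (1 + t ^ 2) := Real.sqrt_pos.2 (by positivity)
  have hnf : ∀ x, ‖f x‖ = Real.sqrt (1 + t ^ 2) * ‖x‖ := by
    intro x
    have : ‖f x‖ ^ 2 = (Real.sqrt (1 + t ^ 2) * ‖x‖) ^ 2 := by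
      rw [mul_pow, Real.sq_sqrt (by positivity), hf]
      simp only
      rw [norm_add_sq_real, inner_smul_right, ho, norm_smul, hn, mul_pow]
      simp; ring
    exact (pow_left_inj₀ (norm_nonneg _) (by positivity) two_ne_zero).1 this
  have himg : f '' s = Metric.ball 0 (Real.sqrt (1 + t ^ 2)) \ {0} := by
    ext y
    constructor
    · rintro ⟨x, ⟨hx1, hx0⟩, rfl⟩
      have hx0 : x ≠ 0 := hx0
      have hx1 : ‖x‖ < 1 := by simpa using hx1
      refine ⟨?_, ?_⟩
      · simp only [Metric.mem_ball, dist_zero_right, hnf]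
        nlinarith
      · intro h
        have h : f x = 0 := h
        have := hnf x
        rw [h, norm_zero] at this
        have : 0 < Real.sqrt (1 + t ^ 2) * ‖x‖ := mul_pos hr (norm_pos_iff.2 hx0)
        linarith
    · rintro ⟨hy1, hy0⟩
      obtain ⟨x, rfl⟩ := hbij.2 y
      refine ⟨x, ⟨?_, ?_⟩, rfl⟩
      · have hy1 : ‖f x‖ < Real.sqrt (1 + t ^ 2) := by simpa using hy1
        rw [hnf] at hy1
        simp only [Metric.mem_ball, dist_zero_right]
        nlinarith
      · intro h
        have h : x = 0 := h
        apply hy0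
        change f x = 0
        rw [← norm_eq_zero, hnf, h]; simp
  have hder : ∀ x ∈ s, HasFDerivWithinAt f (1 + t • fderiv ℝ w x : E →L[ℝ] E) s x := by
    intro x hx
    exact ((hasFDerivAt_id x).add ((hd x hx.2).hasFDerivAt.const_smul t)).hasFDerivWithinAt
  have hpos : ∀ x, 0 < (1 + t • fderiv ℝ w x : E →L[ℝ] E).det := fun x =>
    hb_det_pos _ K (norm_fderiv_le_of_lipschitz ℝ hw) t ht htK
  have hcv := lintegral_abs_det_fderiv_eq_addHaar_image μ hms hder hbij.1.injOn
  rw [himg] at hcv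
  have hvol : μ (Metric.ball 0 (Real.sqrt (1 + t ^ 2)) \ {0}) =
      ENNReal.ofReal (Real.sqrt (1 + t ^ 2) ^ finrank ℝ E) * μ (Metric.ball 0 1) := by
    rw [measure_sdiff_null (by simp), Measure.addHaar_ball_of_pos μ 0 hr]
  rw [hvol] at hcv
  simp_rw [abs_of_pos (hpos _)] at hcv
  have hmeas : Measurable (fun x => (1 + t • fderiv ℝ w x : E →L[ℝ] E).det) :=
    ContinuousLinearMap.continuous_det.measurable.comp
      (measurable_const.add ((measurable_fderiv ℝ w).const_smul t))
  constructor
  · refine ⟨hmeas.aestronglyMeasurable, ?_⟩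
    rw [hasFiniteIntegral_iff_ofReal (Filter.Eventually.of_forall fun x => (hpos x).le), hcv]
    exact ENNReal.mul_lt_top ENNReal.ofReal_lt_top measure_ball_lt_top
  · rw [integral_eq_lintegral_of_nonneg_ae (Filter.Eventually.of_forall fun x => (hpos x).le)
      hmeas.aestronglyMeasurable, hcv, ENNReal.toReal_mul, ENNReal.toReal_ofReal (by positivity)]
    rfl

theorem hb_lip {E : Type*} [NormedAddCommGroup E] [InnerProductSpace ℝ E] [FiniteDimensional ℝ E]
    [MeasurableSpace E] [BorelSpace E] (μ : Measure E) [μ.IsAddHaarMeasure]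
    [Nontrivial E] (hodd : Odd (finrank ℝ E))
    (w : E → E) (K : NNReal) (hw : LipschitzWith K w) (hd : ∀ x, x ≠ 0 → DifferentiableAt ℝ w x)
    (hn : ∀ x, ‖w x‖ = ‖x‖) (ho : ∀ x, inner ℝ x (w x) = 0) : False := by
  classical
  set n := finrank ℝ E with hn'
  obtain ⟨δ, hδ, hδK⟩ : ∃ δ : ℝ, 0 < δ ∧ ∀ t, t < δ → t * K < 1 := by
    refine ⟨1 / (K + 1), by positivity, fun t ht => ?_⟩
    have hK : (0:ℝ) ≤ K := K.2
    rw [lt_div_iff₀ (by positivity)] at ht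
    rcases le_or_gt 0 t with h | h <;> nlinarith
  have H := fun (t : ℝ) (ht : t ∈ Set.Ioo 0 δ) =>
    hb_vol μ w K hw hd hn ho t ht.1.le (hδK t ht.2)
  obtain ⟨S, hS, hcard⟩ := (Set.Ioo_infinite hδ).exists_subset_card_eq (n + 1)
  choose P hPd hP using fun x => hb_det (fderiv ℝ w x)
  have key : ∀ x (t : ℝ), (1 + t • fderiv ℝ w x : E →L[ℝ] E).det =
      ∑ i ∈ S, (1 + i • fderiv ℝ w x : E →L[ℝ] E).det * (Lagrange.basis S id i).eval t := by
    intro x t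
    have hdeg : (P x).degree < S.card := by
      rw [hcard]
      exact lt_of_le_of_lt (degree_le_of_natDegree_le (hPd x)) (by exact_mod_cast Nat.lt_succ_self n)
    have := Lagrange.eq_interpolate (v := id) (s := S) (Set.injOn_id _) hdeg
    rw [← hP]
    conv_lhs => rw [this]
    rw [Lagrange.interpolate_apply, eval_finsetSum]
    refine Finset.sum_congr rfl fun i hi => ?_
    rw [eval_mul, eval_C, ← hP, id]
  have hb : 0 < μ.real (Metric.ball (0:E) 1) :=
    ENNReal.toReal_pos (Metric.measure_ball_pos μ _ one_pos).ne' measure_ball_lt_top.ne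
  refine hb_poly n hodd _ δ hb hδ (∑ i ∈ S, C (∫ x in Metric.ball 0 1 \ {0},
    (1 + i • fderiv ℝ w x : E →L[ℝ] E).det ∂μ) * Lagrange.basis S id i) ?_
  intro t ht
  rw [← (H t ht).2]
  simp_rw [key _ t]
  rw [integral_finsetSum]
  · rw [eval_finsetSum]
    refine Finset.sum_congr rfl fun i hi => ?_
    rw [eval_mul, eval_C, integral_mul_const]
  · intro i hi
    exact (H i (hS hi)).1.mul_const _

theorem hb_normalize {E : Type*} [NormedAddCommGroup E] [InnerProductSpace ℝ E]
    (x y : E) (hx : x ≠ 0) (hy : y ≠ 0) :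
    ‖y‖ * ‖‖x‖⁻¹ • x - ‖y‖⁻¹ • y‖ ≤ 2 * ‖x - y‖ := by
  have hx' : ‖x‖ ≠ 0 := norm_ne_zero_iff.2 hx
  have hy' : ‖y‖ ≠ 0 := norm_ne_zero_iff.2 hy
  have h1 : ‖y‖ * ‖‖x‖⁻¹ • x - ‖y‖⁻¹ • y‖ = ‖(‖y‖ - ‖x‖) • (‖x‖⁻¹ • x) + (x - y)‖ := by
    rw [← norm_norm y, ← norm_smul, norm_norm y, smul_sub, smul_inv_smul₀ hy', sub_smul,
      smul_inv_smul₀ hx']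
    congr 1; abel
  rw [h1]
  refine (norm_add_le _ _).trans ?_
  rw [norm_smul, norm_smul, norm_inv, norm_norm, inv_mul_cancel₀ hx', mul_one, Real.norm_eq_abs]
  have := abs_norm_sub_norm_le y x
  rw [norm_sub_rev y x] at this
  linarith

theorem hb_smooth {E : Type*} [NormedAddCommGroup E] [InnerProductSpace ℝ E]
    [FiniteDimensional ℝ E] (v : E → E) (hv : Continuous v)
    (h0 : ∀ x, ‖x‖ = 1 → v x ≠ 0) :
    ∃ g : E → E, ContDiff ℝ 1 g ∧ ∀ x, ‖x‖ = 1 → 0 < inner ℝ (v x) (g x) := by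
  suffices h : (∀ x, Convex ℝ {c : E | ‖x‖ = 1 → 0 < inner ℝ (v x) c}) ∧
      ∀ x : E, ∃ c : E, ∀ᶠ y in nhds x, c ∈ {c : E | ‖y‖ = 1 → 0 < inner ℝ (v y) c} by
    obtain ⟨g, hg⟩ := exists_contMDiffMap_forall_mem_convex_of_local_const (n := 1)
      (modelWithCornersSelf ℝ E) (F := E) (M := E)
      (t := fun x => {c : E | ‖x‖ = 1 → 0 < inner ℝ (v x) c}) h.1 h.2
    exact ⟨g, g.contMDiff.contDiff, hg⟩
  constructor
  · intro x a ha b hb s t hs ht hst hx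
    have ha := ha hx
    have hb := hb hx
    rw [inner_add_right, inner_smul_right, inner_smul_right]
    rcases hs.eq_or_lt with h | h
    · have : t = 1 := by linarith
      subst h; subst this; simpa using hb
    · have := mul_pos h ha
      have := mul_nonneg ht hb.le
      linarith
  · intro x
    by_cases hx : ‖x‖ = 1
    · refine ⟨v x, ?_⟩
      have h1 : 0 < inner ℝ (v x) (v x) := real_inner_self_pos.2 (h0 x hx)
      have h2 : Continuous fun y => inner ℝ (v y) (v x) := by fun_prop
      filter_upwards [h2.continuousAt.eventually (lt_mem_nhds h1)] with y hy _ using hy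
    · refine ⟨0, ?_⟩
      filter_upwards [continuous_norm.continuousAt.eventually_ne hx] with y hy h
      exact absurd h hy

theorem hb_main {E : Type*} [NormedAddCommGroup E] [InnerProductSpace ℝ E]
    [FiniteDimensional ℝ E] (hodd : Odd (finrank ℝ E)) (v : E → E) (hv : Continuous v)
    (ho : ∀ x, inner ℝ x (v x) = 0)
    (h0 : ∀ x, ‖x‖ = 1 → v x ≠ 0) : False := by
  obtain ⟨g, hg, hgp⟩ := hb_smooth v hv h0
  have : Nontrivial E := Module.nontrivial_of_finrank_pos (R := ℝ) hodd.pos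
  borelize E
  set u : E → E := fun x => g x - (inner ℝ x (g x) : ℝ) • x with hu
  have hus : ContDiff ℝ 1 u := hg.sub ((contDiff_id.inner ℝ hg).smul contDiff_id)
  have hu0 : ∀ x, ‖x‖ = 1 → u x ≠ 0 := by
    intro x hx h
    have h1 := hgp x hx
    rw [sub_eq_zero.1 h, inner_smul_right, real_inner_comm x (v x), ho] at h1
    simp at h1
  have huo : ∀ x, ‖x‖ = 1 → inner ℝ x (u x) = 0 := by
    intro x hx
    simp [hu, inner_sub_right, inner_smul_right, hx]
  set n : E → E := fun x => ‖u x‖⁻¹ • u x with hn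
  have hns : ∀ x, ‖x‖ = 1 → ContDiffAt ℝ 1 n x := by
    intro x hx
    have hux := hus.contDiffAt (x := x)
    exact ((hux.norm ℝ (hu0 x hx)).inv (norm_ne_zero_iff.2 (hu0 x hx))).smul hux
  have hn1 : ∀ x, ‖x‖ = 1 → ‖n x‖ = 1 := by
    intro x hx
    simp only [hn]
    rw [norm_smul, norm_inv, norm_norm, inv_mul_cancel₀ (norm_ne_zero_iff.2 (hu0 x hx))]
  have hno : ∀ x, ‖x‖ = 1 → inner ℝ x (n x) = 0 := by
    intro x hx
    simp only [hn]
    rw [inner_smul_right, huo x hx, mul_zero]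
  obtain ⟨L, hL⟩ : ∃ L, LipschitzOnWith L n (Metric.sphere 0 1) := by
    apply LocallyLipschitzOn.exists_lipschitzOnWith_of_compact (isCompact_sphere 0 1)
    intro x hx
    obtain ⟨K, t, ht, hK⟩ := (hns x (by simpa using hx)).exists_lipschitzOnWith
    exact ⟨K, t, mem_nhdsWithin_of_mem_nhds ht, hK⟩
  set N : E → E := fun x => ‖x‖⁻¹ • x with hN
  have hN1 : ∀ x, x ≠ 0 → ‖N x‖ = 1 := by
    intro x hx
    simp only [hN]
    rw [norm_smul, norm_inv, norm_norm, inv_mul_cancel₀ (norm_ne_zero_iff.2 hx)]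
  set w : E → E := fun x => ‖x‖ • n (N x) with hw
  have hwn : ∀ x, ‖w x‖ = ‖x‖ := by
    intro x
    by_cases hx : x = 0
    · simp [hw, hx]
    · simp only [hw]
      rw [norm_smul, norm_norm, hn1 _ (hN1 x hx), mul_one]
  refine hb_lip (Measure.addHaar : Measure E) hodd w (1 + 2 * L) ?_ ?_ hwn ?_
  · apply LipschitzWith.of_dist_le_mul
    intro x y
    rw [dist_eq_norm, dist_eq_norm]
    have hL0 : (0:ℝ) ≤ L := L.2
    push_cast
    by_cases hx : x = 0
    · have : w x = 0 := by simp [hw, hx]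
      rw [this, hx, zero_sub, zero_sub, norm_neg, norm_neg, hwn]
      nlinarith [mul_nonneg hL0 (norm_nonneg y)]
    by_cases hy : y = 0
    · have : w y = 0 := by simp [hw, hy]
      rw [this, hy, sub_zero, sub_zero, hwn]
      nlinarith [mul_nonneg hL0 (norm_nonneg x)]
    have h1 : w x - w y = (‖x‖ - ‖y‖) • n (N x) + ‖y‖ • (n (N x) - n (N y)) := by
      simp only [hw]; rw [sub_smul, smul_sub]; abel
    rw [h1]
    refine (norm_add_le _ _).trans ?_
    rw [norm_smul (‖x‖ - ‖y‖), norm_smul ‖y‖, hn1 _ (hN1 x hx), mul_one, norm_norm, Real.norm_eq_abs]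
    have h2 := abs_norm_sub_norm_le x y
    have h3 := hL.norm_sub_le (x := N x) (y := N y) (by simpa using hN1 x hx)
      (by simpa using hN1 y hy)
    have h4 : ‖y‖ * ‖N x - N y‖ ≤ 2 * ‖x - y‖ := hb_normalize x y hx hy
    have h5 := mul_le_mul_of_nonneg_left h3 (norm_nonneg y)
    have h6 := mul_le_mul_of_nonneg_left h4 hL0
    nlinarith
  · intro x hx
    have hnorm : DifferentiableAt ℝ (fun x : E => ‖x‖) x := differentiableAt_id.norm ℝ hx
    have hNd : DifferentiableAt ℝ N x :=
      (hnorm.inv (norm_ne_zero_iff.2 hx)).smul differentiableAt_id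
    have hnd : DifferentiableAt ℝ n (N x) := (hns _ (hN1 x hx)).differentiableAt one_ne_zero
    exact hnorm.smul (hnd.comp x hNd)
  · intro x
    by_cases hx : x = 0
    · simp [hx]
    · have h1 : x = ‖x‖ • N x := by
        simp only [hN]; rw [smul_inv_smul₀ (norm_ne_zero_iff.2 hx)]
      simp only [hw]
      rw [inner_smul_right]
      conv_lhs => rw [h1]
      rw [inner_smul_left, ← h1, hno _ (hN1 x hx)]
      simp

theorem hb_basis {F : Type*} [AddCommGroup F] [Module ℝ F] [FiniteDimensional ℝ F]
    (p : ℕ) (hfr : finrank ℝ F = p) (B : F →ₗ[ℝ] F →ₗ[ℝ] ℝ)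
    (hsymm : ∀ x y, B x y = B y x)
    (hposdef : ∀ x : F, x ≠ 0 → 0 < B x x) :
    ∃ T : F ≃ₗ[ℝ] EuclideanSpace ℝ (Fin p), ∀ x y, inner ℝ (T x) (T y) = B x y := by
  let core : @InnerProductSpace.Core ℝ F _ _ _ :=
    { inner := fun x y => B x y
      conj_inner_symm := fun x y => hsymm y x
      re_inner_nonneg := fun x => by
        by_cases hx : x = 0
        · simp [hx]
        · exact (hposdef x hx).le
      add_left := fun x y z => by simp
      smul_left := fun x y r => by simp
      definite := fun x hx => by
        by_contra h
        exact (hposdef x h).ne' hx }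
  let i1 : NormedAddCommGroup F :=
    @InnerProductSpace.Core.toNormedAddCommGroup ℝ F _ _ _ core
  let i2 : InnerProductSpace ℝ F := InnerProductSpace.ofCore core.toCore
  let b := (stdOrthonormalBasis ℝ F).reindex (finCongr hfr)
  exact ⟨b.repr.toLinearEquiv, fun x y => b.repr.inner_map_map x y⟩



/-- (Corollary 1 of the paper.) For odd `p`, a continuous map
`v : ℝᵖ → ℝᵖ` homogeneous of degree 2 which admits a positive definite quadratic
first integral (`B(v(ω), ω) = 0` for a symmetric positive definite bilinear form
`B`) has a nonzero steady state `ω₀`; by homogeneity the whole line `ℝ·ω₀` then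
consists of steady states, so at least one straight line of steady motions exists. -/
theorem exists_steady_state_of_odd_dimension
    (p : ℕ) (hp : Odd p)
    (v : (Fin p → ℝ) → (Fin p → ℝ))
    (hcont : Continuous v)
    (hhom : ∀ (c : ℝ) (ω : Fin p → ℝ), v (c • ω) = c ^ 2 • v ω)
    (B : (Fin p → ℝ) →ₗ[ℝ] (Fin p → ℝ) →ₗ[ℝ] ℝ)
    (hsymm : ∀ x y, B x y = B y x)
    (hposdef : ∀ x : Fin p → ℝ, x ≠ 0 → 0 < B x x)
    (hint : ∀ ω, B (v ω) ω = 0) :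
    ∃ ω₀ : Fin p → ℝ, ω₀ ≠ 0 ∧ v ω₀ = 0 ∧ ∀ μ : ℝ, v (μ • ω₀) = 0 := by
  obtain ⟨T, hT⟩ := hb_basis p (by simp) B hsymm hposdef
  by_contra hcon
  have hne : ∀ x, x ≠ 0 → v x ≠ 0 := by
    intro x hx h
    exact hcon ⟨x, hx, h, fun μ => by rw [hhom, h, smul_zero]⟩
  have hTc : Continuous T := T.toLinearMap.continuous_of_finiteDimensional
  have hTs : Continuous T.symm := T.symm.toLinearMap.continuous_of_finiteDimensional
  refine hb_main (E := EuclideanSpace ℝ (Fin p)) (by simpa using hp)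
    (fun x => T (v (T.symm x))) (hTc.comp (hcont.comp hTs)) ?_ ?_
  · intro x
    have h := hT (T.symm x) (v (T.symm x))
    rw [T.apply_symm_apply] at h
    rw [h, hsymm, hint]
  · intro x hx h
    have hx0 : x ≠ 0 := by
      intro h; simp [h] at hx
    exact hne (T.symm x) (by simpa using hx0) (by simpa using h)
end
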